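/- arXiv:2509.00302 — 2 statements merged into one kernel-verified Lean document; each statement's English description precedes it below -/
import Mathlib

section
/- Let p be an odd prime with p ≡ 2 (mod 3), let s be a positive integer, q = p^{2s}, let h₀ be a positive divisor of p^{s} + 1, and set h = h₀². Then for all integers t, m with 1 ≤ t < m ≤ 2⌈(q + 2p^{s} + 1 − 8h)/(6h)⌉, there exists an optimal (3h−2, 3)-LRC over F_q with parameters [3hm, (3h−2)t + 1, 3h(m−t)]_q, and there exists an optimal (2, 3h−1)-LRC over F_q with parameters [3hm, 2t + 1, 3h(m−t)]_q. -/
/-- The Hamming weight of a vector: the number of nonzero coordinates. -/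
def hammingWt {F : Type*} [Zero F] [DecidableEq F] {n : ℕ} (v : Fin n → F) : ℕ :=
  (Finset.univ.filter (fun i => v i ≠ 0)).card

/-- The minimum distance of the linear code `C` is at least `d`. -/
def MinDistGe {F : Type*} [Field F] [DecidableEq F] {n : ℕ}
    (C : Submodule F (Fin n → F)) (d : ℕ) : Prop :=
  ∀ c ∈ C, c ≠ 0 → d ≤ hammingWt c

/-- The minimum distance of the linear code `C` is exactly `d`. -/
def MinDistEq {F : Type*} [Field F] [DecidableEq F] {n : ℕ}
    (C : Submodule F (Fin n → F)) (d : ℕ) : Prop :=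
  MinDistGe C d ∧ ∃ c ∈ C, c ≠ 0 ∧ hammingWt c = d

/-- `C` is an `(r, δ)`-locally repairable code: every coordinate `i` has a repair
group `R` containing `i`, of size at most `r + δ - 1`, such that the punctured code
`C|_R` has minimum distance at least `δ` (i.e. every codeword whose restriction to
`R` is nonzero has at least `δ` nonzero coordinates inside `R`). -/
def IsLRC {F : Type*} [Field F] [DecidableEq F] {n : ℕ}
    (C : Submodule F (Fin n → F)) (r δ : ℕ) : Prop :=
  ∀ i : Fin n, ∃ R : Finset (Fin n), i ∈ R ∧ R.card ≤ r + δ - 1 ∧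
    ∀ c ∈ C, (∃ j ∈ R, c j ≠ 0) → δ ≤ (R.filter (fun j => c j ≠ 0)).card

/-- The parameters `[n, k, d]` attain the Singleton-type bound for `(r, δ)`-LRCs:
`d = n - k + 1 - (⌈k/r⌉ - 1)(δ - 1)`  (here `⌈k/r⌉ = (k + r - 1)/r`). -/
def SingletonOptimal (n k d r δ : ℕ) : Prop :=
  (d : ℤ) = (n : ℤ) - (k : ℤ) + 1 - ((((k + r - 1) / r : ℕ) : ℤ) - 1) * ((δ : ℤ) - 1)

/-- There exists an optimal `(r, δ)`-LRC over `F` with parameters `[n, k, d]`. -/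
def ExistsOptimalLRC (F : Type*) [Field F] [DecidableEq F] (n k d r δ : ℕ) : Prop :=
  ∃ C : Submodule F (Fin n → F),
    Module.finrank F C = k ∧ MinDistEq C d ∧ IsLRC C r δ ∧ SingletonOptimal n k d r δ

/-!
Over `F_q` with `q = p ^ (2 s)` some curve `E : Y² = X³ + a` has `(p ^ s + 1)²` points: the number
of points is expressed through a Jacobi sum of characters of orders 2 and 3, which lies in the
Eisenstein integers and equals `p ^ s` times a unit because `p` is inert there; the character of
order 6 evaluated at `a` cancels that unit. As `h₀ ∣ p ^ s + 1` and the automorphism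
`φ (X, Y) = (w X, Y)`, `w³ = 1`, satisfies `1 + φ + φ² = 0`, the curve has a `φ`-stable subgroup
`H` of order `h = h₀²`.

The function `ζ (P) = ∑ T ∈ H, Y (P + T)` is invariant under translation by `H` and under `φ`, is
odd, and has pole order `3 h` at infinity. Outside at most `7 h` points its fibres are therefore
unions of three cosets of `H`, on which the `X`-coordinates are distinct since `ζ` is odd and
nonzero there. These fibres are the repair groups. With `D` the denominator of `ζ` and `U` either
`L((3h - 2) O) / D` or `L(2 O)`, the words `c ζ ^ t + ∑ k < t, ζ ^ k g_k`, `g_k ∈ U`, form the code: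
times `D ^ t` such a word lies in `L(3 h t O)`, so it has at most `3 h t` zeros.

In a repair group, `f ∈ L((3h - 2) O)` has fewer than `3h - 2` zeros: if `g = N - v D` vanishes on
the group, the conjugate of `g` times `f` is `u + v Y` with `deg v` below the number of zeros of
`f`, so `v = 0`, and then `u` has too many zeros as well.
-/

open Finset Polynomial

section Codes

variable {F ι : Type*} [Field F] (ζ : ι → F) (U : Submodule F (ι → F)) (t : ℕ)

/-- The encoder `(c, g₀, …, g_{t-1}) ↦ c ζ ^ t + ∑ ζ ^ k g_k` with coefficients `g_k` in a space
`U` of functions on the coordinate set. The fibres of `ζ` are going to be the repair groups. -/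
def blockWord : F × (Fin t → U) →ₗ[F] (ι → F) :=
  (LinearMap.toSpanSingleton F (ι → F) (ζ ^ t)).coprod
    (LinearMap.lsum F (fun _ ↦ U) F fun k ↦ LinearMap.mulLeft F (ζ ^ (k : ℕ)) ∘ₗ U.subtype)

/-- The code of all words `c ζ ^ t + ∑ ζ ^ k g_k`, where `k < t` and `g_k ∈ U`. -/
def blockCode : Submodule F (ι → F) :=
  LinearMap.range (blockWord ζ U t)

variable {ζ U t}

lemma blockWord_apply (x : F × (Fin t → U)) :
    blockWord ζ U t x = x.1 • ζ ^ t + ∑ k : Fin t, ζ ^ (k : ℕ) * (x.2 k : ι → F) := by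
  simp [blockWord]

lemma blockWord_apply_apply (x : F × (Fin t → U)) (i : ι) :
    blockWord ζ U t x i = x.1 * ζ i ^ t + ∑ k : Fin t, ζ i ^ (k : ℕ) * (x.2 k : ι → F) i := by
  simp [blockWord_apply]

lemma exists_mem_blockWord_eq (hU : 1 ∈ U) (x : F × (Fin t → U)) (v : F) :
    ∃ g ∈ U, g = (x.1 * v ^ t) • 1 + ∑ k : Fin t, v ^ (k : ℕ) • (x.2 k : ι → F) ∧
      ∀ j, ζ j = v → blockWord ζ U t x j = g j :=
  ⟨_, U.add_mem (U.smul_mem _ hU) (U.sum_mem fun k _ ↦ U.smul_mem _ (x.2 k).2), rfl, fun j hj ↦ by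
    simp [blockWord_apply_apply, hj]⟩

lemma blockWord_injective [Fintype ι] [DecidableEq F] (hU : 1 ∈ U)
    (hlocal : ∀ g ∈ U, ∀ i, (∀ j, ζ j = ζ i → g j = 0) → g = 0)
    (ht : t < #(univ.image ζ)) : Function.Injective (blockWord ζ U t) := by
  rw [injective_iff_map_eq_zero]
  intro x hx
  have hvanish : ∀ P i, x.1 * ζ i ^ t + ∑ k : Fin t, (x.2 k : ι → F) P * ζ i ^ (k : ℕ) = 0 := by
    intro P i
    obtain ⟨g, hgU, hg, hxg⟩ := exists_mem_blockWord_eq (ζ := ζ) hU x (ζ i)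
    have hg0 : g = 0 := hlocal g hgU i fun j hj ↦ by rw [← hxg j hj, hx, Pi.zero_apply]
    simpa [mul_comm] using congrFun (hg.symm.trans hg0) P
  have hpoly : ∀ P, C x.1 * X ^ t + ∑ k : Fin t, C ((x.2 k : ι → F) P) * X ^ (k : ℕ) = 0 := by
    intro P
    refine eq_zero_of_natDegree_lt_card_of_eval_eq_zero' _ (univ.image ζ) ?_
      (lt_of_le_of_lt ?_ ht)
    · simp only [mem_image, mem_univ, true_and, forall_exists_index, forall_apply_eq_imp_iff]
      intro i
      simpa [eval_finsetSum] using hvanish P i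
    · exact (natDegree_add_le _ _).trans (max_le (natDegree_C_mul_X_pow_le _ _)
        (natDegree_sum_le_of_forall_le _ _ fun k _ ↦
          (natDegree_C_mul_X_pow_le _ _).trans k.2.le))
  have hcoeff : ∀ P n, (if n = t then x.1 else 0) +
      ∑ k : Fin t, (if n = (k : ℕ) then (x.2 k : ι → F) P else 0) = 0 := fun P n ↦ by
    simpa [coeff_X_pow, finsetSum_coeff] using congrArg (coeff · n) (hpoly P)
  ext k
  · obtain ⟨P, -⟩ := (image_nonempty.mp (card_pos.mp (ht.pos)))
    simpa [fun k : Fin t ↦ k.2.ne'] using hcoeff P t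
  · simpa [k.2.ne, Fin.val_inj] using hcoeff _ k

lemma eval_comp_mem_blockCode (hU : 1 ∈ U) {p : F[X]} (hp : p.natDegree ≤ t) :
    (fun i ↦ p.eval (ζ i)) ∈ blockCode ζ U t := by
  refine ⟨(p.coeff t, fun k ↦ ⟨p.coeff k • 1, U.smul_mem _ hU⟩), ?_⟩
  ext i
  rw [blockWord_apply_apply, eval_eq_sum_range' (Nat.lt_succ_of_le hp), sum_range_succ, sum_range]
  simp [mul_comm, add_comm]

end Codes

section OptimalCodes

lemma card_filter_mem_of_card_fibers {ι κ : Type*} [Fintype ι] [DecidableEq κ] {ζ : ι → κ} {w : ℕ}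
    (hfib : ∀ i, #{j | ζ j = ζ i} = w) {S : Finset κ} (hS : S ⊆ univ.image ζ) :
    #{i | ζ i ∈ S} = w * #S := by
  refine (card_eq_sum_card_fiberwise (f := ζ) (t := S) fun i hi ↦ by simpa using hi).trans ?_
  rw [mul_comm, ← smul_eq_mul]
  refine sum_eq_card_nsmul fun v hv ↦ ?_
  obtain ⟨i, -, rfl⟩ := mem_image.mp (hS hv)
  rw [← hfib i, filter_filter]
  exact congrArg card (filter_congr fun j _ ↦ and_iff_right_of_imp fun h ↦ h ▸ hv)

variable {F : Type*} [Field F] [DecidableEq F] {n : ℕ}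

lemma hammingWt_add_card_zeros (v : Fin n → F) : hammingWt v + #{i | v i = 0} = n := by
  rw [hammingWt, add_comm, card_filter_add_card_filter_not, card_fin]

variable {ζ : Fin n → F} {U : Submodule F (Fin n → F)} {w m r t : ℕ}

lemma isLRC_blockCode (hU : 1 ∈ U) (hfib : ∀ i, #{j | ζ j = ζ i} = w) (hrw : r ≤ w)
    (hlocal : ∀ g ∈ U, g ≠ 0 → ∀ i, #{j | ζ j = ζ i ∧ g j = 0} < r) :
    IsLRC (blockCode ζ U t) r (w + 1 - r) := by
  refine fun i ↦ ⟨({j | ζ j = ζ i} : Finset (Fin n)), by simp, by rw [hfib]; omega, ?_⟩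
  rintro _ ⟨x, rfl⟩ ⟨j, hj, hne⟩
  obtain ⟨g, hgU, -, hxg⟩ := exists_mem_blockWord_eq (ζ := ζ) hU x (ζ i)
  have hzeros : #{j | ζ j = ζ i ∧ g j = 0} < r := hlocal g hgU (fun hg ↦ hne <| by
    rw [hxg j (mem_filter.mp hj).2, hg, Pi.zero_apply]) i
  have hsplit := card_filter_add_card_filter_not (s := ({j | ζ j = ζ i} : Finset (Fin n)))
    (fun j ↦ blockWord ζ U t x j = 0)
  have heq : filter (fun j ↦ blockWord ζ U t x j = 0) {j | ζ j = ζ i} =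
      ({j | ζ j = ζ i ∧ g j = 0} : Finset (Fin n)) := by
    rw [filter_filter]
    exact filter_congr fun j _ ↦ and_congr_right fun hj ↦ by rw [hxg j hj]
  rw [heq, hfib] at hsplit
  change w + 1 - r ≤ #(filter (fun j ↦ ¬ blockWord ζ U t x j = 0) _)
  omega

lemma exists_mem_blockCode_hammingWt_eq (hU : 1 ∈ U) (hfib : ∀ i, #{j | ζ j = ζ i} = w)
    (ht : t ≤ #(univ.image ζ)) : ∃ c ∈ blockCode ζ U t, hammingWt c = n - w * t := by
  obtain ⟨S, hS, rfl⟩ := exists_subset_card_eq ht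
  refine ⟨_, eval_comp_mem_blockCode (p := ∏ v ∈ S, (X - C v)) hU
    (by simp [natDegree_prod_of_monic, monic_X_sub_C]), ?_⟩
  rw [← card_filter_mem_of_card_fibers hfib hS]
  have hwt := hammingWt_add_card_zeros fun i ↦ (∏ v ∈ S, (X - C v)).eval (ζ i)
  have hzeros : ∀ i, (∏ v ∈ S, (X - C v)).eval (ζ i) = 0 ↔ ζ i ∈ S := by
    simp [eval_prod, prod_eq_zero_iff, sub_eq_zero]
  simp only [hzeros] at hwt
  exact Nat.eq_sub_of_add_eq hwt

lemma singletonOptimal_blockCode (hr : 0 < r) (hrw : r ≤ w) (htm : t ≤ m) :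
    SingletonOptimal (w * m) (r * t + 1) (w * (m - t)) r (w + 1 - r) := by
  have hceil : (r * t + 1 + r - 1) / r = t + 1 := by
    rw [show r * t + 1 + r - 1 = r * (t + 1) by rw [mul_add]; omega, Nat.mul_div_cancel_left _ hr]
  rw [SingletonOptimal, hceil]
  push_cast [htm, Nat.sub_add_comm hrw, hrw]
  ring

theorem existsOptimalLRC_of_fibers (hU : 1 ∈ U) (hrank : Module.finrank F U = r) (hrw : r ≤ w)
    (hfib : ∀ i, #{j | ζ j = ζ i} = w) (himage : #(univ.image ζ) = m) (htm : t < m)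
    (hlocal : ∀ g ∈ U, g ≠ 0 → ∀ i, #{j | ζ j = ζ i ∧ g j = 0} < r)
    (hglobal : ∀ c ∈ blockCode ζ U t, c ≠ 0 → #{i | c i = 0} ≤ w * t) :
    ExistsOptimalLRC F n (r * t + 1) (w * (m - t)) r (w + 1 - r) := by
  have hn : n = w * m := by
    rw [← himage, ← card_filter_mem_of_card_fibers hfib subset_rfl]
    simp
  replace htm : t < #(univ.image ζ) := htm.trans_eq himage.symm
  obtain ⟨i, -⟩ := image_nonempty.mp (card_pos.mp htm.pos)
  have hr : 0 < r := (hlocal 1 hU (fun h ↦ one_ne_zero (congrFun h i)) i).pos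
  have hpos : 0 < w * (m - t) := Nat.mul_pos (hr.trans_le hrw) (by omega)
  have hsub : w * (m - t) = n - w * t := by rw [hn, Nat.mul_sub]
  refine ⟨blockCode ζ U t, ?_, ⟨fun c hc hne ↦ ?_, ?_⟩, isLRC_blockCode hU hfib hrw hlocal, ?_⟩
  · have hinj : Function.Injective (blockWord ζ U t) := by
      refine blockWord_injective hU (fun g hg i hi ↦ by_contra fun hne ↦ ?_) htm
      have hzeros := hlocal g hg hne i
      rw [filter_congr fun j _ ↦ and_iff_left_of_imp (hi j), hfib] at hzeros
      omega
    rw [blockCode, LinearMap.finrank_range_of_inj hinj]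
    simp [hrank, Module.finrank_pi_fintype]
    ring
  · have := hglobal c hc hne
    have := hammingWt_add_card_zeros c
    omega
  · obtain ⟨c, hc, hwt⟩ := exists_mem_blockCode_hammingWt_eq (t := t) hU hfib htm.le
    refine ⟨c, hc, ?_, hwt.trans hsub.symm⟩
    rintro rfl
    simp [hammingWt] at hwt
    omega
  · rw [hn]
    exact singletonOptimal_blockCode hr hrw (htm.le.trans_eq himage)

end OptimalCodes

section CoordinateRing

open WeierstrassCurve.Affine CoordinateRing
open scoped Polynomial.Bivariate

variable {F : Type*} [Field F] {W : WeierstrassCurve.Affine F}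

/-- Evaluation of a regular function at an affine point of the curve. -/
noncomputable def evalAt {x y : F} (h : W.Equation x y) : W.CoordinateRing →ₐ[F] F :=
  { AdjoinRoot.evalEval h with
    commutes' c := (AdjoinRoot.evalEval_mk h (C (C c))).trans (evalEval_CC ..) }

lemma evalAt_mk {x y : F} (h : W.Equation x y) (g : F[X][Y]) :
    evalAt h (mk W g) = g.evalEval x y :=
  AdjoinRoot.evalEval_mk h g

@[simp]
lemma evalAt_smul_basis {x y : F} (h : W.Equation x y) (p q : F[X]) :
    evalAt h (p • (1 : W.CoordinateRing) + q • mk W Y) = p.eval x + q.eval x * y := by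
  rw [smul, smul, mul_one, ← map_mul, ← map_add, evalAt_mk]
  simp [evalEval_C]

lemma evalAt_injective {x₁ y₁ x₂ y₂ : F} {h₁ : W.Equation x₁ y₁} {h₂ : W.Equation x₂ y₂}
    (h : evalAt h₁ = evalAt h₂) : x₁ = x₂ ∧ y₁ = y₂ := by
  have heval := fun g ↦ congrArg (fun φ : W.CoordinateRing →ₐ[F] F ↦ φ (mk W g)) h
  simp only [evalAt_mk] at heval
  exact ⟨by simpa [evalEval_C] using heval (C X), by simpa using heval Y⟩

lemma card_le_natDegree_norm {Ω : Type*} {x y : Ω → F} (hxy : ∀ P, W.Equation (x P) (y P))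
    (hinj : Function.Injective fun P ↦ (x P, y P)) {f : W.CoordinateRing} (hf : f ≠ 0)
    {S : Finset Ω} (hS : ∀ P ∈ S, evalAt (hxy P) f = 0) :
    #S ≤ (Algebra.norm F[X] f).natDegree := by
  have hker : ∀ P : S, ∀ g ∈ Ideal.span {f}, evalAt (hxy P) g = 0 := fun P g hg ↦ by
    obtain ⟨k, rfl⟩ := Ideal.mem_span_singleton.mp hg
    rw [map_mul, hS P P.2, zero_mul]
  let Φ (P : S) : (W.CoordinateRing ⧸ Ideal.span {f}) →ₐ[F] F :=
    Ideal.Quotient.liftₐ _ (evalAt (hxy P)) (hker P)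
  have hΦ : Function.Injective Φ := fun P Q hPQ ↦ by
    have heq : evalAt (hxy P) = evalAt (hxy Q) := by
      simpa only [Φ, Ideal.Quotient.liftₐ_comp] using
        congrArg (AlgHom.comp · (Ideal.Quotient.mkₐ F (Ideal.span {f}))) hPQ
    exact Subtype.ext (hinj (Prod.ext_iff.mpr (evalAt_injective heq)))
  have hfin : FiniteDimensional F (W.CoordinateRing ⧸ Ideal.span {f}) :=
    Module.Finite.equiv ((Ideal.quotientEquivPiSpan _ (CoordinateRing.basis W)
      (Ideal.span_singleton_eq_bot.not.2 hf)).restrictScalars F).symm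
  calc #S = Nat.card S := by simp
    _ ≤ Nat.card ((W.CoordinateRing ⧸ Ideal.span {f}) →ₐ[F] F) := Nat.card_le_card_of_injective Φ hΦ
    _ ≤ _ := card_algHom_le_finrank ..
    _ = _ := finrank_quotient_span_eq_natDegree_norm (CoordinateRing.basis W) hf

lemma two_nsmul_degree_le_iff {p : F[X]} {n : ℕ} :
    2 • p.degree ≤ n ↔ p.degree < (n / 2 + 1 : ℕ) := by
  rcases eq_or_ne p 0 with rfl | hp
  · simp
  · rw [degree_eq_natDegree hp]
    simp only [nsmul_eq_mul]
    norm_cast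
    omega

lemma two_nsmul_degree_add_three_le_iff {p : F[X]} {n : ℕ} :
    2 • p.degree + 3 ≤ n ↔ p.degree < ((n - 1) / 2 : ℕ) := by
  rcases eq_or_ne p 0 with rfl | hp
  · simp
  · rw [degree_eq_natDegree hp]
    simp only [nsmul_eq_mul]
    norm_cast
    omega

variable (W) in
/-- The identification `(p, q) ↦ p + q Y` of `F[X]²` with the coordinate ring. -/
noncomputable def smulBasis : F[X] × F[X] →ₗ[F] W.CoordinateRing :=
  ((LinearMap.toSpanSingleton F[X] W.CoordinateRing 1).coprod
    (LinearMap.toSpanSingleton F[X] W.CoordinateRing (mk W Y))).restrictScalars F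

lemma smulBasis_apply (p q : F[X]) :
    smulBasis W (p, q) = p • (1 : W.CoordinateRing) + q • mk W Y := by
  simp [smulBasis]

lemma smulBasis_injective : Function.Injective (smulBasis W) := by
  refine (injective_iff_map_eq_zero _).mpr fun ⟨p, q⟩ h ↦ ?_
  exact Prod.ext_iff.mpr (smul_basis_eq_zero (smulBasis_apply p q ▸ h))

variable (W) in
/-- The Riemann–Roch space `L(n O)` of regular functions whose only pole, at the point `O` at
infinity, has order at most `n`. That order is the degree of the norm down to `F[X]`, that is
`max (2 deg p) (2 deg q + 3)` for the function `p + q Y`. -/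
noncomputable def poleSpace (n : ℕ) : Submodule F W.CoordinateRing :=
  LinearMap.range (smulBasis W ∘ₗ
    (degreeLT F (n / 2 + 1)).subtype.prodMap (degreeLT F ((n - 1) / 2)).subtype)

lemma smul_basis_mem_poleSpace {p q : F[X]} {n : ℕ} :
    p • (1 : W.CoordinateRing) + q • mk W Y ∈ poleSpace W n ↔
      2 • p.degree ≤ n ∧ 2 • q.degree + 3 ≤ n := by
  rw [two_nsmul_degree_le_iff, two_nsmul_degree_add_three_le_iff, ← mem_degreeLT, ← mem_degreeLT,
    ← smulBasis_apply, poleSpace, LinearMap.range_comp, Submodule.mem_map]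
  simp [smulBasis_injective.eq_iff, LinearMap.range_prodMap]

lemma mem_poleSpace {f : W.CoordinateRing} {n : ℕ} :
    f ∈ poleSpace W n ↔ (Algebra.norm F[X] f).degree ≤ n := by
  obtain ⟨p, q, rfl⟩ := exists_smul_basis_eq f
  rw [smul_basis_mem_poleSpace, degree_norm_smul_basis, sup_le_iff]

lemma finrank_poleSpace {n : ℕ} (hn : 0 < n) : Module.finrank F (poleSpace W n) = n := by
  have hfin (k : ℕ) : Module.Finite F (degreeLT F k) :=
    Module.Finite.equiv (degreeLTEquiv F k).symm
  have hrank (k : ℕ) : Module.finrank F (degreeLT F k) = k := by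
    rw [(degreeLTEquiv F k).finrank_eq, Module.finrank_fin_fun]
  have hinj : Function.Injective (smulBasis W ∘ₗ
      (degreeLT F (n / 2 + 1)).subtype.prodMap (degreeLT F ((n - 1) / 2)).subtype) :=
    smulBasis_injective.comp (Subtype.val_injective.prodMap Subtype.val_injective)
  rw [poleSpace, LinearMap.finrank_range_of_inj hinj, Module.finrank_prod, hrank, hrank]
  omega

lemma poleSpace_mono {n k : ℕ} (h : n ≤ k) : poleSpace W n ≤ poleSpace W k := fun f hf ↦
  mem_poleSpace.mpr ((mem_poleSpace.mp hf).trans (by exact_mod_cast h))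

lemma one_mem_poleSpace : (1 : W.CoordinateRing) ∈ poleSpace W 0 := by
  simp [mem_poleSpace]

lemma mul_mem_poleSpace {f g : W.CoordinateRing} {n k : ℕ} (hf : f ∈ poleSpace W n)
    (hg : g ∈ poleSpace W k) : f * g ∈ poleSpace W (n + k) := by
  rw [mem_poleSpace] at *
  rw [map_mul, degree_mul, Nat.cast_add]
  exact add_le_add hf hg

lemma pow_mem_poleSpace {f : W.CoordinateRing} {n : ℕ} (hf : f ∈ poleSpace W n) (k : ℕ) :
    f ^ k ∈ poleSpace W (n * k) := by
  induction k with
  | zero => simpa using one_mem_poleSpace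
  | succ k ih => simpa only [pow_succ, mul_add, mul_one] using mul_mem_poleSpace ih hf

lemma aeval_mk_Y_mem_poleSpace (q : F[X]) : aeval (mk W Y) q ∈ poleSpace W (3 * q.natDegree) := by
  rw [aeval_eq_sum_range]
  refine Submodule.sum_mem _ fun k hk ↦ Submodule.smul_mem _ _ ?_
  have hY : mk W Y ∈ poleSpace W 3 := by
    simpa using (smul_basis_mem_poleSpace (W := W) (p := 0) (q := 1)).mpr (by simp)
  exact poleSpace_mono (Nat.mul_le_mul_left 3 (mem_range_succ_iff.mp hk)) (pow_mem_poleSpace hY k)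

lemma evalAt_aeval_mk_Y {x y : F} (h : W.Equation x y) (q : F[X]) :
    evalAt h (aeval (mk W Y) q) = q.eval y := by
  rw [← aeval_algHom_apply, evalAt_mk, evalEval_X, coe_aeval_eq_eval]

lemma degree_norm_mk_Y : (Algebra.norm F[X] (mk W Y)).degree = 3 := by
  simpa using degree_norm_smul_basis (W' := W) (p := 0) (q := 1)

lemma aeval_mk_Y_ne_zero {q : F[X]} (hq : q ≠ 0) : aeval (mk W Y) q ≠ 0 := by
  intro h
  have hlead : q.leadingCoeff • mk W Y ^ q.natDegree + aeval (mk W Y) q.eraseLead = 0 := by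
    rw [Algebra.smul_def, ← aeval_monomial, ← map_add, add_comm,
      eraseLead_add_monomial_natDegree_leadingCoeff, h]
  rcases q.eraseLead_natDegree_lt_or_eraseLead_eq_zero with hlt | hzero
  · have hmem : mk W Y ^ q.natDegree ∈ poleSpace W (3 * q.eraseLead.natDegree) := by
      rw [← Submodule.smul_mem_iff _ (leadingCoeff_ne_zero.mpr hq),
        eq_neg_of_add_eq_zero_left hlead]
      exact Submodule.neg_mem _ (aeval_mk_Y_mem_poleSpace _)
    rw [mem_poleSpace, map_pow, degree_pow, degree_norm_mk_Y, nsmul_eq_mul] at hmem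
    norm_cast at hmem
    omega
  · have hY : mk W Y ≠ 0 := by
      intro hY
      have hbasis : (0 : F[X]) • (1 : W.CoordinateRing) + (1 : F[X]) • mk W Y = 0 := by
        rw [zero_smul, one_smul, zero_add, hY]
      exact one_ne_zero (smul_basis_eq_zero hbasis).2
    rw [hzero, map_zero, add_zero] at hlead
    exact smul_ne_zero (leadingCoeff_ne_zero.mpr hq) (pow_ne_zero _ hY) hlead

lemma card_le_of_mem_poleSpace {Ω : Type*} {x y : Ω → F} (hxy : ∀ P, W.Equation (x P) (y P))
    (hinj : Function.Injective fun P ↦ (x P, y P)) {n : ℕ} {f : W.CoordinateRing}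
    (hf : f ∈ poleSpace W n) (hne : f ≠ 0) {S : Finset Ω}
    (hS : ∀ P ∈ S, evalAt (hxy P) f = 0) : #S ≤ n :=
  (card_le_natDegree_norm hxy hinj hne hS).trans (natDegree_le_of_degree_le (mem_poleSpace.mp hf))

lemma eval_norm_eq_zero {x y : F} (h : W.Equation x y) {f : W.CoordinateRing}
    (hf : evalAt h f = 0) : (Algebra.norm F[X] f).eval x = 0 := by
  obtain ⟨p, q, rfl⟩ := exists_smul_basis_eq f
  rw [evalAt_smul_basis] at hf
  simp only [norm_smul_basis, eval_sub, eval_add, eval_mul, eval_pow, eval_C, eval_X]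
  linear_combination (p.eval x - q.eval x * y - q.eval x * (W.a₁ * x + W.a₃)) * hf +
    q.eval x ^ 2 * (W.equation_iff x y).mp h

lemma exists_norm_mul_norm_eq (f g : W.CoordinateRing) :
    ∃ u v : F[X], Algebra.norm F[X] f * Algebra.norm F[X] g =
        Algebra.norm F[X] (u • (1 : W.CoordinateRing) + v • mk W Y) ∧
      ∀ x y, ∀ h : W.Equation x y, evalAt h f = 0 → evalAt h g = 0 → v.eval x = 0 := by
  obtain ⟨p, q, rfl⟩ := exists_smul_basis_eq f
  obtain ⟨r, s, rfl⟩ := exists_smul_basis_eq g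
  -- `u + v Y` is `g` times the conjugate of `f`
  refine ⟨p * r - q * r * (C W.a₁ * X + C W.a₃) -
    q * s * (X ^ 3 + C W.a₂ * X ^ 2 + C W.a₄ * X + C W.a₆), p * s - q * r, ?_, ?_⟩
  · simp only [norm_smul_basis]
    ring
  · intro x y h hf hg
    rw [evalAt_smul_basis] at hf hg
    rw [eval_sub, eval_mul, eval_mul]
    linear_combination s.eval x * hf - q.eval x * hg

lemma card_lt_of_mem_poleSpace {Ω : Type*} {x y : Ω → F} (hxy : ∀ P, W.Equation (x P) (y P))
    {S T : Finset Ω} (hx : Set.InjOn x S) (hS : 3 ≤ #S) (hTS : T ⊆ S) {f g : W.CoordinateRing}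
    (hf : f ∈ poleSpace W #S) (hf0 : f ≠ 0) (hg : g ∈ poleSpace W (#S - 2)) (hg0 : g ≠ 0)
    (hfS : ∀ P ∈ S, evalAt (hxy P) f = 0) (hgT : ∀ P ∈ T, evalAt (hxy P) g = 0) :
    #T < #S - 2 := by
  by_contra! hcard
  obtain ⟨u, v, hnorm, hv⟩ := exists_norm_mul_norm_eq f g
  have hdeg : (Algebra.norm F[X] f * Algebra.norm F[X] g).degree ≤ (2 * #S - 2 : ℕ) := by
    rw [degree_mul]
    refine (add_le_add (mem_poleSpace.mp hf) (mem_poleSpace.mp hg)).trans ?_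
    norm_cast
    omega
  rw [hnorm, degree_norm_smul_basis, sup_le_iff, two_nsmul_degree_le_iff,
    two_nsmul_degree_add_three_le_iff] at hdeg
  have hv0 : v = 0 := eq_zero_of_degree_lt_of_eval_index_eq_zero _ (hx.mono hTS)
    (hdeg.2.trans_le (by norm_cast; omega)) fun P hP ↦ hv _ _ _ (hfS P (hTS hP)) (hgT P hP)
  have hu2 : Algebra.norm F[X] f * Algebra.norm F[X] g = u ^ 2 := by
    rw [hnorm, hv0, norm_smul_basis]
    ring
  have hu0 : u = 0 := by
    refine eq_zero_of_degree_lt_of_eval_index_eq_zero _ hx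
      (hdeg.1.trans_le (by norm_cast; omega)) fun P hP ↦ pow_eq_zero_iff two_ne_zero |>.mp ?_
    rw [← eval_pow, ← hu2, eval_mul, eval_norm_eq_zero (hxy P) (hfS P hP), zero_mul]
  rw [hu0, zero_pow two_ne_zero, mul_eq_zero] at hu2
  exact hu2.elim (Algebra.norm_ne_zero_iff_of_basis (CoordinateRing.basis W) |>.mpr hf0)
    (Algebra.norm_ne_zero_iff_of_basis (CoordinateRing.basis W) |>.mpr hg0)

end CoordinateRing

section StableSubgroups

variable {A : Type*} [AddCommGroup A] {φ : A →+ A}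

lemma card_comap_mk' [Finite A] (K : AddSubgroup A) (H : AddSubgroup (A ⧸ K)) :
    Nat.card (H.comap (QuotientAddGroup.mk' K)) = Nat.card H * Nat.card K := by
  refine Nat.eq_of_mul_eq_mul_right (Nat.pos_of_ne_zero H.index_ne_zero_of_finite) ?_
  calc Nat.card (H.comap (QuotientAddGroup.mk' K)) * H.index
      = Nat.card A := by
        rw [← H.index_comap_of_surjective (QuotientAddGroup.mk'_surjective K),
          AddSubgroup.card_mul_index]
    _ = Nat.card H * Nat.card K * H.index := by
        rw [mul_right_comm, H.card_mul_index, mul_comm, ← K.card_mul_index, AddSubgroup.index]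

lemma exists_stable_card_mul [Finite A] {K : AddSubgroup A} (hK : K ≤ K.comap φ) {n : ℕ}
    (hquot : ∃ H : AddSubgroup (A ⧸ K), Nat.card H = n ∧
      H ≤ H.comap (QuotientAddGroup.map K K φ hK)) :
    ∃ H : AddSubgroup A, Nat.card H = n * Nat.card K ∧ H ≤ H.comap φ := by
  obtain ⟨H, rfl, hH⟩ := hquot
  exact ⟨H.comap (QuotientAddGroup.mk' K), card_comap_mk' K H, fun P hP ↦ hH hP⟩

lemma quotient_map_add_map_map_eq_zero (hφ : ∀ P, P + φ P + φ (φ P) = 0) {K : AddSubgroup A}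
    (hK : K ≤ K.comap φ) (P : A ⧸ K) :
    P + QuotientAddGroup.map K K φ hK P +
      QuotientAddGroup.map K K φ hK (QuotientAddGroup.map K K φ hK P) = 0 := by
  obtain ⟨P, rfl⟩ := QuotientAddGroup.mk'_surjective K P
  exact congrArg (QuotientAddGroup.mk' K) (hφ P)

lemma zmultiples_le_comap {u : A} (h : φ u ∈ AddSubgroup.zmultiples u) :
    AddSubgroup.zmultiples u ≤ (AddSubgroup.zmultiples u).comap φ :=
  AddSubgroup.zmultiples_le_of_mem h

lemma map_map_eq_neg_sub (hφ : ∀ P, P + φ P + φ (φ P) = 0) (v : A) : φ (φ v) = -v - φ v := by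
  rw [← neg_add', eq_comm]
  exact neg_eq_of_add_eq_zero_right (hφ v)

lemma map_map_map_eq_self (hφ : ∀ P, P + φ P + φ (φ P) = 0) (v : A) : φ (φ (φ v)) = v := by
  rw [map_map_eq_neg_sub hφ (φ v), map_map_eq_neg_sub hφ]
  abel

variable [Finite A] {r : ℕ}

lemma exists_stable_card_eq_prime (hφ : ∀ P, P + φ P + φ (φ P) = 0) (hr : r.Prime)
    (hdvd : r ∣ Nat.card A) {l : ℤ} (hl : (r : ℤ) ∣ l ^ 2 + l + 1) :
    ∃ H : AddSubgroup A, Nat.card H = r ∧ H ≤ H.comap φ := by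
  have := Fact.mk hr
  obtain ⟨v, hv⟩ := exists_prime_addOrderOf_dvd_card' r hdvd
  by_cases hu : φ v + (1 + l) • v = 0
  · refine ⟨AddSubgroup.zmultiples v, by rw [Nat.card_zmultiples, hv],
      zmultiples_le_comap ⟨-(1 + l), ?_⟩⟩
    exact (neg_smul _ _).trans (eq_neg_of_add_eq_zero_left hu).symm
  · -- `φ ^ 2 + φ + 1 = (φ - l) (φ + 1 + l)` modulo `r`, so `(φ + 1 + l) v` is an eigenvector
    have hrv : (r : ℤ) • v = 0 := by rw [natCast_zsmul, ← hv, addOrderOf_nsmul_eq_zero]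
    have hru : r • (φ v + (1 + l) • v) = 0 := by
      rw [← natCast_zsmul, smul_add, smul_comm, ← map_zsmul, hrv, map_zero, smul_zero, add_zero]
    refine ⟨AddSubgroup.zmultiples (φ v + (1 + l) • v),
      by rw [Nat.card_zmultiples, addOrderOf_eq_prime hru hu], zmultiples_le_comap ⟨l, ?_⟩⟩
    obtain ⟨c, hc⟩ := hl
    have hlv : (l ^ 2 + l + 1) • v = 0 := by rw [hc, mul_comm, mul_smul, hrv, smul_zero]
    simp only [map_add, map_zsmul, map_map_eq_neg_sub hφ]
    rw [← sub_eq_zero, ← hlv]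
    module

lemma exists_stable_card_eq_prime_sq_of_irreducible (hφ : ∀ P, P + φ P + φ (φ P) = 0)
    (hr : r.Prime) (hdvd : r ∣ Nat.card A) (hl : ∀ l : ℤ, ¬(r : ℤ) ∣ l ^ 2 + l + 1) :
    ∃ H : AddSubgroup A, Nat.card H = r ^ 2 ∧ H ≤ H.comap φ := by
  have := Fact.mk hr
  obtain ⟨v, hv⟩ := exists_prime_addOrderOf_dvd_card' r hdvd
  have hnot : φ v ∉ AddSubgroup.zmultiples v := by
    rintro ⟨l, hlv : l • v = φ v⟩
    refine hl l (hv ▸ addOrderOf_dvd_iff_zsmul_eq_zero.mpr ?_)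
    rw [← hφ v, ← hlv, map_zsmul, ← hlv]
    module
  have horder : addOrderOf (QuotientAddGroup.mk' (AddSubgroup.zmultiples v) (φ v)) = r := by
    refine addOrderOf_eq_prime ?_ fun h ↦ hnot ((QuotientAddGroup.eq_zero_iff _).mp h)
    rw [← map_nsmul, ← map_nsmul, ← hv, addOrderOf_nsmul_eq_zero, map_zero, map_zero]
  refine ⟨AddSubgroup.zmultiples v ⊔ AddSubgroup.zmultiples (φ v), ?_, sup_le ?_ ?_⟩
  · rw [← QuotientAddGroup.comap_map_mk', card_comap_mk', AddMonoidHom.map_zmultiples,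
      Nat.card_zmultiples, horder, Nat.card_zmultiples, hv, sq]
  · exact AddSubgroup.zmultiples_le_of_mem
      (AddSubgroup.mem_sup_right (AddSubgroup.mem_zmultiples _))
  · refine AddSubgroup.zmultiples_le_of_mem ?_
    rw [AddSubgroup.mem_comap, map_map_eq_neg_sub hφ]
    exact sub_mem (neg_mem (AddSubgroup.mem_sup_left (AddSubgroup.mem_zmultiples _)))
      (AddSubgroup.mem_sup_right (AddSubgroup.mem_zmultiples _))

lemma exists_stable_card_eq_prime_sq (hφ : ∀ P, P + φ P + φ (φ P) = 0) (hr : r.Prime)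
    (hdvd : r ^ 2 ∣ Nat.card A) : ∃ H : AddSubgroup A, Nat.card H = r ^ 2 ∧ H ≤ H.comap φ := by
  have hdvd' : r ∣ Nat.card A := (dvd_pow_self r two_ne_zero).trans hdvd
  by_cases! hl : ∃ l : ℤ, (r : ℤ) ∣ l ^ 2 + l + 1
  · obtain ⟨l, hl⟩ := hl
    obtain ⟨K, hKcard, hK⟩ := exists_stable_card_eq_prime hφ hr hdvd' hl
    rw [sq, ← K.card_mul_index, hKcard] at hdvd
    simpa only [hKcard, sq] using exists_stable_card_mul hK <| exists_stable_card_eq_prime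
      (quotient_map_add_map_map_eq_zero hφ hK) hr (Nat.dvd_of_mul_dvd_mul_left hr.pos hdvd) hl
  · exact exists_stable_card_eq_prime_sq_of_irreducible hφ hr hdvd' hl

theorem exists_stable_card_eq_sq {n : ℕ} (hn : n ≠ 0) (hφ : ∀ P, P + φ P + φ (φ P) = 0)
    (hdvd : n ^ 2 ∣ Nat.card A) : ∃ H : AddSubgroup A, Nat.card H = n ^ 2 ∧ H ≤ H.comap φ := by
  induction n using induction_on_primes generalizing A with
  | zero => exact absurd rfl hn
  | one => exact ⟨⊥, by simp, bot_le⟩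
  | prime_mul r n hr ih =>
    rw [mul_pow] at hdvd ⊢
    obtain ⟨K, hKcard, hK⟩ := exists_stable_card_eq_prime_sq hφ hr (dvd_of_mul_right_dvd hdvd)
    rw [← K.card_mul_index, hKcard] at hdvd
    rw [mul_comm, ← hKcard]
    exact exists_stable_card_mul hK (ih (right_ne_zero_of_mul hn)
      (quotient_map_add_map_map_eq_zero hφ hK)
      (Nat.dvd_of_mul_dvd_mul_left (pow_pos hr.pos 2) hdvd))

end StableSubgroups

section EisensteinIntegers

lemma zmod_eq_of_pow_three_eq {p : ℕ} (hp : p.Prime) (hp3 : p % 3 = 2) {a b : ZMod p}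
    (h : a ^ 3 = b ^ 3) : a = b := by
  have := Fact.mk hp
  have hpow (c : ZMod p) : (c ^ 3) ^ (2 * (p / 3) + 1) = c := by
    rcases eq_or_ne c 0 with rfl | hc
    · simp
    · rw [← pow_mul, show 3 * (2 * (p / 3) + 1) = (p - 1) + p by omega, pow_add,
        ZMod.pow_card_sub_one_eq_one hc, ZMod.pow_card, one_mul]
  rw [← hpow a, h, hpow b]

lemma prime_dvd_of_dvd_sq_add_mul_add_sq {p : ℕ} (hp : p.Prime) (hp3 : p % 3 = 2) {A B : ℤ}
    (h : (p : ℤ) ∣ A ^ 2 + A * B + B ^ 2) : (p : ℤ) ∣ A ∧ (p : ℤ) ∣ B := by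
  have := Fact.mk hp
  simp only [← ZMod.intCast_zmod_eq_zero_iff_dvd] at h ⊢
  push_cast at h
  have hAB : (A : ZMod p) = B :=
    zmod_eq_of_pow_three_eq hp hp3 (by linear_combination (A - B : ZMod p) * h)
  have h3 : (3 : ZMod p) ≠ 0 := by
    intro h
    have : ((3 : ℕ) : ZMod p) = 0 := by exact_mod_cast h
    rw [ZMod.natCast_eq_zero_iff, Nat.prime_dvd_prime_iff_eq hp Nat.prime_three] at this
    omega
  have hB : (B : ZMod p) = 0 := by
    rw [hAB] at h
    exact pow_eq_zero_iff two_ne_zero |>.mp <|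
      (mul_eq_zero.mp (show (3 : ZMod p) * B ^ 2 = 0 by linear_combination h)).resolve_left h3
  exact ⟨hAB.trans hB, hB⟩

lemma exists_eq_pow_mul_of_sq_add_mul_add_sq_eq {p : ℕ} (hp : p.Prime) (hp3 : p % 3 = 2)
    {s : ℕ} {A B : ℤ} (h : A ^ 2 + A * B + B ^ 2 = (p : ℤ) ^ (2 * s)) :
    ∃ A' B' : ℤ, A = p ^ s * A' ∧ B = p ^ s * B' ∧ A' ^ 2 + A' * B' + B' ^ 2 = 1 := by
  induction s generalizing A B with
  | zero => exact ⟨A, B, by simp, by simp, by simpa using h⟩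
  | succ s ih =>
    obtain ⟨⟨a, rfl⟩, ⟨b, rfl⟩⟩ := prime_dvd_of_dvd_sq_add_mul_add_sq hp hp3
      (h ▸ dvd_pow_self (p : ℤ) (by omega))
    have hp0 : (p : ℤ) ^ 2 ≠ 0 := by exact_mod_cast pow_ne_zero 2 hp.ne_zero
    obtain ⟨A', B', rfl, rfl, hnorm⟩ := ih (A := a) (B := b)
      (mul_left_cancel₀ hp0 (by linear_combination h))
    exact ⟨A', B', by ring, by ring, hnorm⟩

lemma sq_eq_sub_one_of_isPrimitiveRoot_six {K : Type*} [Field K] {ρ : K}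
    (hρ : IsPrimitiveRoot ρ 6) : ρ ^ 2 = ρ - 1 := by
  have h3 : ρ ^ 3 + 1 = 0 := by
    have : (ρ ^ 3 - 1) * (ρ ^ 3 + 1) = 0 := by linear_combination hρ.pow_eq_one
    exact (mul_eq_zero.mp this).resolve_left
      (sub_ne_zero.mpr (hρ.pow_ne_one_of_pos_of_lt (by norm_num) (by norm_num)))
  have h1 : ρ + 1 ≠ 0 := fun h ↦
    hρ.pow_ne_one_of_pos_of_lt (l := 2) (by norm_num) (by norm_num)
      (by linear_combination (ρ - 1) * h)
  exact mul_left_cancel₀ h1 (by linear_combination h3)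

lemma exists_eq_add_mul_of_mem_adjoin {K : Type*} [Field K] {ρ : K} (hρ : IsPrimitiveRoot ρ 6)
    {z : K} (hz : z ∈ Algebra.adjoin ℤ {ρ}) : ∃ A B : ℤ, z = A + B * ρ := by
  induction hz using Algebra.adjoin_induction with
  | mem z hz => exact ⟨0, 1, by simpa using hz⟩
  | algebraMap n => exact ⟨n, 0, by simp⟩
  | add x y _ _ hx hy =>
    obtain ⟨⟨A, B, rfl⟩, ⟨A', B', rfl⟩⟩ := hx, hy
    exact ⟨A + A', B + B', by push_cast; ring⟩
  | mul x y _ _ hx hy =>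
    obtain ⟨⟨A, B, rfl⟩, ⟨A', B', rfl⟩⟩ := hx, hy
    exact ⟨A * A' - B * B', A * B' + B * A' + B * B', by
      push_cast; linear_combination B * B' * sq_eq_sub_one_of_isPrimitiveRoot_six hρ⟩

lemma pow_six_eq_one_of_sq_add_mul_add_sq_eq_one {K : Type*} [Field K] {ρ : K}
    (hρ : IsPrimitiveRoot ρ 6) {A B : ℤ} (h : A ^ 2 + A * B + B ^ 2 = 1) :
    (A + B * ρ) ^ 6 = 1 := by
  have hA : -1 ≤ A ∧ A ≤ 1 := by constructor <;> nlinarith [sq_nonneg (2 * B + A)]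
  have hB : -1 ≤ B ∧ B ≤ 1 := by constructor <;> nlinarith [sq_nonneg (2 * A + B)]
  have hρ6 := hρ.pow_eq_one
  have hρ12 : (ρ ^ 2) ^ 6 = 1 := by rw [pow_right_comm, hρ6, one_pow]
  rw [sq_eq_sub_one_of_isPrimitiveRoot_six hρ] at hρ12
  obtain ⟨⟨hA, hA'⟩, ⟨hB, hB'⟩⟩ := hA, hB
  interval_cases A <;> interval_cases B <;> norm_num at h <;> push_cast <;>
    first | ring1 | linear_combination hρ6 | linear_combination hρ12

lemma exists_pow_six_eq_one_of_mul_star_eq {p : ℕ} (hp : p.Prime) (hp3 : p % 3 = 2) {s : ℕ}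
    {ρ z : ℂ} (hρ : IsPrimitiveRoot ρ 6) (hz : z ∈ Algebra.adjoin ℤ {ρ})
    (hnorm : z * star z = (p : ℂ) ^ (2 * s)) : ∃ u : ℂ, u ^ 6 = 1 ∧ z = p ^ s * u := by
  obtain ⟨A, B, rfl⟩ := exists_eq_add_mul_of_mem_adjoin hρ hz
  have hunit : ρ * star ρ = 1 := by
    rw [Complex.star_def, Complex.mul_conj, Complex.normSq_eq_norm_sq,
      hρ.norm'_eq_one (by norm_num)]
    simp
  have hstar : star ρ = 1 - ρ :=
    mul_left_cancel₀ (hρ.ne_zero (by norm_num))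
      (by linear_combination hunit + sq_eq_sub_one_of_isPrimitiveRoot_six hρ)
  have hAB : A ^ 2 + A * B + B ^ 2 = (p : ℤ) ^ (2 * s) := by
    have : ((A ^ 2 + A * B + B ^ 2 : ℤ) : ℂ) = ((p : ℤ) ^ (2 * s) : ℤ) := by
      push_cast
      simp only [star_add, star_mul', star_intCast, hstar] at hnorm
      linear_combination hnorm + B ^ 2 * sq_eq_sub_one_of_isPrimitiveRoot_six hρ
    exact_mod_cast this
  obtain ⟨A', B', rfl, rfl, hAB'⟩ := exists_eq_pow_mul_of_sq_add_mul_add_sq_eq hp hp3 hAB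
  exact ⟨A' + B' * ρ, pow_six_eq_one_of_sq_add_mul_add_sq_eq_one hρ hAB', by push_cast; ring⟩

end EisensteinIntegers

section SixthRootsOfUnity

lemma six_dvd_sq_sub_one {p : ℕ} (hp2 : p % 2 = 1) (hp3 : p % 3 = 2) : 6 ∣ p ^ 2 - 1 := by
  have h6 : p ≡ 5 [MOD 6] := by
    rw [Nat.ModEq]
    omega
  exact (Nat.modEq_iff_dvd' (Nat.one_le_pow _ _ (by omega))).mp (h6.pow 2).symm

lemma exists_isPrimitiveRoot_of_dvd_card_sub_one {F : Type*} [Field F] [Fintype F] {n : ℕ}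
    (hn : n ∣ Fintype.card F - 1) : ∃ ζ : F, IsPrimitiveRoot ζ n := by
  classical
  obtain ⟨k, hk⟩ := hn
  obtain ⟨g, hg⟩ := IsCyclic.exists_ofOrder_eq_natCard (α := Fˣ)
  rw [Nat.card_eq_fintype_card, Fintype.card_units] at hg
  have hgroot : IsPrimitiveRoot (g : F) (Fintype.card F - 1) :=
    IsPrimitiveRoot.coe_units_iff.mpr (hg ▸ IsPrimitiveRoot.orderOf g)
  exact ⟨g ^ k, hgroot.pow (Nat.sub_pos_of_lt Fintype.one_lt_card) (hk.trans (mul_comm n k))⟩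

lemma two_ne_zero_of_isPrimitiveRoot_six {K : Type*} [Field K] {ζ : K}
    (hζ : IsPrimitiveRoot ζ 6) : (2 : K) ≠ 0 := fun h2 ↦
  hζ.pow_ne_one_of_pos_of_lt (l := 3) (by norm_num) (by norm_num)
    (by linear_combination (ζ + 1) * sq_eq_sub_one_of_isPrimitiveRoot_six hζ - h2)

lemma three_ne_zero_of_isPrimitiveRoot_six {K : Type*} [Field K] {ζ : K}
    (hζ : IsPrimitiveRoot ζ 6) : (3 : K) ≠ 0 := fun h3 ↦
  have hζ1 : ζ + 1 = 0 := pow_eq_zero_iff two_ne_zero |>.mp <| show (ζ + 1) ^ 2 = 0 by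
    linear_combination sq_eq_sub_one_of_isPrimitiveRoot_six hζ + ζ * h3
  hζ.pow_ne_one_of_pos_of_lt (l := 2) (by norm_num) (by norm_num)
    (by linear_combination (ζ - 1) * hζ1)

end SixthRootsOfUnity

section CharacterFibres

variable {F R : Type*} [Field F] [CommRing R]

lemma isPrimitiveRoot_apply_generator {χ : MulChar F R} {g : Fˣ}
    (hg : ∀ x, x ∈ Subgroup.zpowers g) : IsPrimitiveRoot (χ g) (orderOf χ) := by
  have horder : orderOf χ = orderOf (χ g) := orderOf_eq_orderOf_iff.mpr fun k ↦ by
    rw [← MulChar.pow_apply_coe, ← MulChar.one_apply_coe (R' := R) g, MulChar.eq_iff hg]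
  exact horder ▸ IsPrimitiveRoot.orderOf _

lemma exists_apply_eq_of_pow_orderOf_eq_one [IsDomain R] [Finite F] (χ : MulChar F R) {u : R}
    (hu : u ^ orderOf χ = 1) : ∃ a : Fˣ, χ a = u := by
  obtain ⟨g, hg⟩ := IsCyclic.exists_generator (α := Fˣ)
  have : NeZero (orderOf χ) := ⟨χ.orderOf_pos.ne'⟩
  obtain ⟨k, -, rfl⟩ := (isPrimitiveRoot_apply_generator (χ := χ) hg).eq_pow_of_pow_eq_one hu
  exact ⟨g ^ k, by simp⟩

lemma apply_eq_one_iff_exists_pow_eq [Finite F] {χ : MulChar F R} {u : F} (hu : u ≠ 0) :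
    χ u = 1 ↔ ∃ y, y ^ orderOf χ = u := by
  constructor
  · intro h
    obtain ⟨g, hg⟩ := IsCyclic.exists_generator (α := Fˣ)
    obtain ⟨k, hk⟩ := mem_powers_iff_mem_zpowers.mpr (hg (Units.mk0 u hu))
    have hgu : (g : F) ^ k = u := by simpa using congrArg Units.val hk
    rw [← hgu, map_pow, (isPrimitiveRoot_apply_generator hg).pow_eq_one_iff_dvd] at h
    obtain ⟨j, rfl⟩ := h
    exact ⟨g ^ j, by rw [← hgu, ← pow_mul, mul_comm]⟩
  · rintro ⟨y, rfl⟩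
    have hy : IsUnit y := (ne_zero_pow χ.orderOf_pos.ne' hu).isUnit
    rw [map_pow, ← MulChar.pow_apply' _ χ.orderOf_pos.ne', pow_orderOf_eq_one,
      MulChar.one_apply hy]

lemma card_filter_pow_eq [IsDomain R] [Fintype F] [DecidableEq F] {ζ : F} {n : ℕ}
    (hζ : IsPrimitiveRoot ζ n) {χ : MulChar F R} (hχ : orderOf χ = n) (u : F) :
    (#{y | y ^ n = u} : R) = ∑ k ∈ range n, χ u ^ k := by
  have hn : 0 < n := hχ ▸ χ.orderOf_pos
  rcases eq_or_ne u 0 with rfl | hu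
  · rw [MulChar.map_zero, zero_geom_sum, if_neg hn.ne']
    simp [hn.ne', filter_eq']
  have hcard : #{y | y ^ n = u} = Multiset.card (nthRoots n u) := by
    rw [← Multiset.toFinset_card_of_nodup (hζ.nthRoots_nodup hu)]
    congr 1
    ext y
    simp [mem_nthRoots hn]
  rw [hcard, hζ.card_nthRoots]
  subst hχ
  rw [← apply_eq_one_iff_exists_pow_eq hu]
  split_ifs with h
  · simp [h]
  · have hpow : χ u ^ orderOf χ = 1 := by
      rw [← MulChar.pow_apply' _ hn.ne', pow_orderOf_eq_one, MulChar.one_apply hu.isUnit]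
    have hmul := mul_geom_sum (χ u) (orderOf χ)
    rw [hpow, sub_self] at hmul
    rw [(mul_eq_zero.mp hmul).resolve_left (sub_ne_zero.mpr h), Nat.cast_zero]

end CharacterFibres

section PointCount

variable {F : Type*} [Field F] [Fintype F]

lemma sum_apply_add_mul_apply {R : Type*} [CommRing R] (χ φ : MulChar F R) {a : F} (ha : a ≠ 0) :
    ∑ u, χ (u + a) * φ u = χ a * φ (-a) * jacobiSum φ χ := by
  rw [jacobiSum, mul_sum]
  refine (Fintype.sum_equiv (Equiv.mulLeft₀ (-a) (neg_ne_zero.mpr ha)) _ _ fun v ↦ ?_).symm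
  rw [Equiv.mulLeft₀_apply, show -a * v + a = a * (1 - v) by ring, map_mul, map_mul]
  ring

lemma jacobiSum_mul_star_jacobiSum {χ φ : MulChar F ℂ} (hχ : χ ≠ 1) (hφ : φ ≠ 1)
    (hχφ : χ * φ ≠ 1) : jacobiSum χ φ * star (jacobiSum χ φ) = Fintype.card F := by
  have hstar : star (jacobiSum χ φ) = jacobiSum χ⁻¹ φ⁻¹ := by
    simp [jacobiSum, star_sum, MulChar.star_apply', -RCLike.star_def]
  have hchar : ringChar ℂ ≠ ringChar F := by
    rw [ringChar.eq_zero]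
    exact (CharP.ringChar_ne_zero_of_finite F).symm
  rw [hstar, jacobiSum_mul_jacobiSum_inv hchar hχ hφ hχφ]

variable [DecidableEq F]

lemma card_filter_sq_eq_cube_add {ζ : F} (hζ : IsPrimitiveRoot ζ 6) {χ ψ : MulChar F ℂ}
    (hχ : orderOf χ = 2) (hψ : orderOf ψ = 3) (a : F) :
    (#{P : F × F | P.2 ^ 2 = P.1 ^ 3 + a} : ℂ) =
      Fintype.card F + ∑ u, χ (u + a) * ψ u + star (∑ u, χ (u + a) * ψ u) := by
  have hχinv : χ⁻¹ = χ := inv_eq_of_mul_eq_one_right (by rw [← sq, ← hχ, pow_orderOf_eq_one])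
  have hψinv : ψ⁻¹ = ψ ^ 2 :=
    inv_eq_of_mul_eq_one_right (by
      rw [← pow_succ', show 2 + 1 = orderOf ψ from hψ.symm, pow_orderOf_eq_one])
  have hstar : star (∑ u, χ (u + a) * ψ u) = ∑ u, χ (u + a) * ψ u ^ 2 := by
    simp only [star_sum, star_mul', MulChar.star_apply', hχinv, hψinv,
      MulChar.pow_apply' _ two_ne_zero]
  have hχsum : ∑ u, χ (u + a) = 0 :=
    (Equiv.sum_comp (Equiv.addRight a) χ).trans
      (MulChar.sum_eq_zero_of_ne_one (by rintro rfl; simp at hχ))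
  have hsquares (c : F) : (#{y : F | y ^ 2 = c} : ℂ) = 1 + χ c := by
    rw [card_filter_pow_eq (hζ.pow (a := 3) (by norm_num) rfl) hχ]
    simp [sum_range_succ]
  have hcubes (u : F) : (#{x : F | x ^ 3 = u} : ℂ) = 1 + ψ u + ψ u ^ 2 := by
    rw [card_filter_pow_eq (hζ.pow (a := 2) (by norm_num) rfl) hψ]
    simp [sum_range_succ]
  calc (#{P : F × F | P.2 ^ 2 = P.1 ^ 3 + a} : ℂ)
      = ∑ x : F, (#{y : F | y ^ 2 = x ^ 3 + a} : ℂ) := by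
        simp only [card_filter, ← univ_product_univ, sum_product, Nat.cast_sum]
    _ = Fintype.card F + ∑ x : F, χ (x ^ 3 + a) := by
        simp [hsquares, sum_add_distrib]
    _ = Fintype.card F + ∑ u, #{x : F | x ^ 3 = u} • χ (u + a) := by
        rw [← sum_fiberwise univ (fun x : F ↦ x ^ 3)]
        congr! 2 with u
        exact sum_eq_card_nsmul fun x hx ↦ by rw [(mem_filter.mp hx).2]
    _ = Fintype.card F + ∑ u, χ (u + a) * ψ u + ∑ u, χ (u + a) * ψ u ^ 2 := by
        simp only [nsmul_eq_mul, hcubes, mul_comm _ (χ _), mul_add, mul_one, sum_add_distrib,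
          hχsum, zero_add, add_assoc]
    _ = _ := by rw [hstar]

theorem exists_card_filter_sq_eq_cube_add {p : ℕ} (hp : p.Prime) (hp3 : p % 3 = 2) {s : ℕ}
    (hF : Fintype.card F = p ^ (2 * s)) {ζ : F} (hζ : IsPrimitiveRoot ζ 6) :
    ∃ a : F, a ≠ 0 ∧ #{P : F × F | P.2 ^ 2 = P.1 ^ 3 + a} = p ^ (2 * s) + 2 * p ^ s := by
  have hρ := Complex.isPrimitiveRoot_exp 6 (by norm_num)
  set ρ := Complex.exp (2 * Real.pi * Complex.I / (6 : ℕ))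
  have h6 : 6 ∣ Fintype.card F - 1 :=
    hζ.dvd_of_pow_eq_one _ (FiniteField.pow_card_sub_one_eq_one ζ (hζ.ne_zero (by norm_num)))
  obtain ⟨θ, hθ⟩ := MulChar.exists_mulChar_orderOf F h6 hρ
  have hθpow {k : ℕ} (hk : ¬ 6 ∣ k) : θ ^ k ≠ 1 := fun h ↦ hk (hθ ▸ orderOf_dvd_of_pow_eq_one h)
  have hθ6 : θ ^ 6 = 1 := hθ ▸ pow_orderOf_eq_one θ
  have hψ : orderOf (θ ^ 2) = 3 := by simp [orderOf_pow, hθ]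
  have hχ : orderOf (θ ^ 3) = 2 := by simp [orderOf_pow, hθ]
  obtain ⟨u, hu, hJ⟩ := exists_pow_six_eq_one_of_mul_star_eq hp hp3 (s := s) hρ
    (z := jacobiSum (θ ^ 2) (θ ^ 3))
    (jacobiSum_mem_algebraAdjoin_of_pow_eq_one (by rw [pow_right_comm, hθ6, one_pow])
      (by rw [pow_right_comm, hθ6, one_pow]) hρ)
    (by rw [jacobiSum_mul_star_jacobiSum (hθpow (by norm_num)) (hθpow (by norm_num))
          (by rw [← pow_add]; exact hθpow (by norm_num)), hF]; norm_cast)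
  obtain ⟨a, ha⟩ := exists_apply_eq_of_pow_orderOf_eq_one θ (hθ.symm ▸ hu)
  refine ⟨a, a.ne_zero, ?_⟩
  have hsum : ∑ x : F, (θ ^ 3) (x + a) * (θ ^ 2) x = p ^ s := by
    rw [sum_apply_add_mul_apply _ _ a.ne_zero, hJ, MulChar.pow_apply' _ two_ne_zero, ← map_pow,
      neg_sq, map_pow, MulChar.pow_apply' _ three_ne_zero, ha]
    linear_combination (p : ℂ) ^ s * hu
  have hcount := card_filter_sq_eq_cube_add hζ hχ hψ (a : F)
  rw [hsum, hF] at hcount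
  have : (#{P : F × F | P.2 ^ 2 = P.1 ^ 3 + (a : F)} : ℂ) = (p ^ (2 * s) + 2 * p ^ s : ℕ) := by
    rw [hcount]
    simp
    ring
  exact_mod_cast this

end PointCount

section Coordinates

open WeierstrassCurve.Affine

variable {F : Type*} [Field F] {W : WeierstrassCurve.Affine F} {P Q : W.Point}

/-- The `X`-coordinate of a point, with the junk value `0` at infinity. -/
def pointX : W.Point → F
  | .zero => 0
  | .some x _ _ => x

/-- The `Y`-coordinate of a point, with the junk value `0` at infinity. -/
def pointY : W.Point → F
  | .zero => 0
  | .some _ y _ => y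

@[simp]
lemma pointX_some {x y : F} (h : W.Nonsingular x y) : pointX (.some x y h) = x :=
  rfl

@[simp]
lemma pointY_some {x y : F} (h : W.Nonsingular x y) : pointY (.some x y h) = y :=
  rfl

@[elab_as_elim]
lemma point_induction_of_ne_zero {motive : (P : W.Point) → P ≠ 0 → Prop}
    (some : ∀ x y (h : W.Nonsingular x y), motive (.some x y h) (Point.some_ne_zero h))
    (P : W.Point) (hP : P ≠ 0) : motive P hP := by
  cases P with
  | zero => exact absurd rfl hP
  | some x y h => exact some x y h

lemma equation_pointX_pointY (hP : P ≠ 0) : W.Equation (pointX P) (pointY P) := by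
  induction P, hP using point_induction_of_ne_zero with
  | some x y h => exact h.1

lemma point_eq_of_coords_eq (hP : P ≠ 0) (hQ : Q ≠ 0) (hX : pointX P = pointX Q)
    (hY : pointY P = pointY Q) : P = Q := by
  induction P, hP using point_induction_of_ne_zero with | some x y h =>
  induction Q, hQ using point_induction_of_ne_zero with | some x' y' h' =>
  simpa using And.intro hX hY

lemma pointX_eq_iff (hP : P ≠ 0) (hQ : Q ≠ 0) : pointX P = pointX Q ↔ P = Q ∨ P = -Q := by
  induction P, hP using point_induction_of_ne_zero with | some x y h =>
  induction Q, hQ using point_induction_of_ne_zero with | some x' y' h' =>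
  exact Point.X_eq_iff

instance finite_point [Finite F] : Finite W.Point :=
  .of_equiv (Option _) (nonsingularPointEquiv W).symm

end Coordinates

section MordellCurve

open WeierstrassCurve.Affine

variable {F : Type*} [Field F] {a w : F}

/-- The curve `Y² = X³ + a`. -/
abbrev mordellCurve (a : F) : WeierstrassCurve.Affine F :=
  ⟨0, 0, 0, 0, a⟩

lemma equation_mordellCurve_iff {x y : F} :
    (mordellCurve a).Equation x y ↔ y ^ 2 = x ^ 3 + a := by
  simp [equation_iff]

lemma Δ_mordellCurve : (mordellCurve a).Δ = -(2 ^ 4 * 3 ^ 3 * a ^ 2) := by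
  simp only [WeierstrassCurve.Δ, WeierstrassCurve.b₂, WeierstrassCurve.b₄, WeierstrassCurve.b₆,
    WeierstrassCurve.b₈]
  ring

lemma isElliptic_mordellCurve_iff :
    (mordellCurve a).IsElliptic ↔ (2 : F) ≠ 0 ∧ (3 : F) ≠ 0 ∧ a ≠ 0 := by
  rw [WeierstrassCurve.isElliptic_iff, Δ_mordellCurve, isUnit_iff_ne_zero]
  simp [and_assoc]

@[simp]
lemma pointY_neg (P : (mordellCurve a).Point) : pointY (-P) = -pointY P := by
  cases P with
  | zero => exact neg_zero.symm
  | some x y h => simp [negY]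

lemma pointY_sq {P : (mordellCurve a).Point} (hP : P ≠ 0) : pointY P ^ 2 = pointX P ^ 3 + a :=
  equation_mordellCurve_iff.mp (equation_pointX_pointY hP)

lemma sq_add_add_one_eq_zero_of_isPrimitiveRoot_three (hw : IsPrimitiveRoot w 3) :
    w ^ 2 + w + 1 = 0 := by
  have hsum := hw.geom_sum_eq_zero (by norm_num)
  simp only [sum_range_succ, sum_range_zero] at hsum
  linear_combination hsum

lemma nonsingular_mul_left [(mordellCurve a).IsElliptic] (hw : w ^ 3 = 1) {x y : F}
    (h : (mordellCurve a).Nonsingular x y) : (mordellCurve a).Nonsingular (w * x) y := by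
  rw [← equation_iff_nonsingular, equation_mordellCurve_iff] at h ⊢
  rw [mul_pow, hw, h, one_mul]

lemma not_eq_mul_left_and_eq_negY [(mordellCurve a).IsElliptic] (hw : IsPrimitiveRoot w 3)
    {x y : F} (h : (mordellCurve a).Nonsingular x y) :
    ¬(x = w * x ∧ y = (mordellCurve a).negY (w * x) y) := by
  obtain ⟨h2, -, ha⟩ := isElliptic_mordellCurve_iff.mp ‹_›
  rintro ⟨hx, hy⟩
  have hx0 : x = 0 := by
    have : (w - 1) * x = 0 := by linear_combination -hx
    exact (mul_eq_zero.mp this).resolve_left (sub_ne_zero.mpr (hw.ne_one (by norm_num)))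
  have hy0 : y = 0 := by
    have : 2 * y = 0 := by
      simp only [negY] at hy
      linear_combination hy
    exact (mul_eq_zero.mp this).resolve_left h2
  apply ha
  linear_combination hy0 * y - hx0 * x ^ 2 - equation_mordellCurve_iff.mp h.1

variable [DecidableEq F]

lemma slope_mordellCurve {x y u v : F} (hxy : (mordellCurve a).Equation x y)
    (huv : (mordellCurve a).Equation u v) (h : y + v ≠ 0) :
    (mordellCurve a).slope x u y v = (x ^ 2 + x * u + u ^ 2) / (y + v) := by
  rw [equation_mordellCurve_iff] at hxy huv
  by_cases hx : x = u
  · subst hx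
    have hv : v = y := by
      have : (y - v) * (y + v) = 0 := by linear_combination hxy - huv
      exact (sub_eq_zero.mp ((mul_eq_zero.mp this).resolve_right h)).symm
    subst hv
    rw [slope_of_Y_ne rfl (by simpa [negY, eq_neg_iff_add_eq_zero])]
    simp only [negY]
    congr 1 <;> ring
  · rw [slope_of_X_ne hx, div_eq_div_iff (sub_ne_zero.mpr hx) h]
    linear_combination hxy - huv

lemma pointY_add {P Q : (mordellCurve a).Point} (hP : P ≠ 0) (hQ : Q ≠ 0)
    (h : pointY P + pointY Q ≠ 0) :
    pointY (P + Q) * (pointY P + pointY Q) ^ 3 =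
      (2 * pointX P + pointX Q) * (pointX P ^ 2 + pointX P * pointX Q + pointX Q ^ 2)
          * (pointY P + pointY Q) ^ 2
        - (pointX P ^ 2 + pointX P * pointX Q + pointX Q ^ 2) ^ 3
        - pointY P * (pointY P + pointY Q) ^ 3 := by
  induction P, hP using point_induction_of_ne_zero with | some x y hxy =>
  induction Q, hQ using point_induction_of_ne_zero with | some u v huv =>
  simp only [pointX_some, pointY_some] at h ⊢
  rw [Point.add_of_Y_ne (by simpa [negY, eq_neg_iff_add_eq_zero]), pointY_some,
    addY, negAddY, addX, slope_mordellCurve hxy.1 huv.1 h]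
  simp only [negY]
  field_simp
  ring

lemma slope_mul_left (hw : w ^ 3 = 1) (x u y v : F) :
    (mordellCurve a).slope (w * x) (w * u) y v = w ^ 2 * (mordellCurve a).slope x u y v := by
  have hw0 : w ≠ 0 := ne_zero_pow three_ne_zero (hw ▸ one_ne_zero)
  by_cases hx : x = u
  · subst hx
    by_cases hy : y = (mordellCurve a).negY x v
    · rw [slope_of_Y_eq rfl hy, slope_of_Y_eq rfl (by simpa [negY] using hy), mul_zero]
    · rw [slope_of_Y_ne rfl hy, slope_of_Y_ne rfl (by simpa [negY] using hy)]
      simp only [negY]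
      ring
  · have hxu : x - u ≠ 0 := sub_ne_zero.mpr hx
    rw [slope_of_X_ne hx, slope_of_X_ne (by simpa [hw0] using hx), ← mul_sub]
    field_simp
    linear_combination -(y - v) * hw

lemma slope_mul_left_eq_zero [(mordellCurve a).IsElliptic] (hw : IsPrimitiveRoot w 3) {x y : F}
    (h : (mordellCurve a).Nonsingular x y) :
    (mordellCurve a).slope x (w * x) y y = 0 := by
  by_cases hy : y + y = 0
  · have hx : x ≠ w * x := fun hx ↦ not_eq_mul_left_and_eq_negY hw h
      ⟨hx, by simpa [negY] using eq_neg_of_add_eq_zero_left hy⟩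
    rw [slope_of_X_ne hx, sub_self, zero_div]
  · rw [slope_mordellCurve h.1 (nonsingular_mul_left hw.pow_eq_one h).1 hy, div_eq_zero_iff]
    left
    linear_combination x ^ 2 * sq_add_add_one_eq_zero_of_isPrimitiveRoot_three hw

lemma card_point_mordellCurve [Fintype F] [(mordellCurve a).IsElliptic] :
    Nat.card (mordellCurve a).Point = #{P : F × F | P.2 ^ 2 = P.1 ^ 3 + a} + 1 := by
  rw [Nat.card_congr (pointEquiv (mordellCurve a))]
  change Nat.card (Option _) = _
  rw [Finite.card_option,
    Nat.card_congr (Equiv.subtypeEquivRight fun _ ↦ equation_mordellCurve_iff),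
    Nat.card_eq_fintype_card, Fintype.card_subtype]

variable [(mordellCurve a).IsElliptic]

/-- The automorphism `(x, y) ↦ (w * x, y)` of `Y² = X³ + a` attached to a primitive cube root of
unity `w`. -/
def cubeRootMul (hw : IsPrimitiveRoot w 3) :
    (mordellCurve a).Point →+ (mordellCurve a).Point where
  toFun
    | .zero => .zero
    | .some x y h => .some (w * x) y (nonsingular_mul_left hw.pow_eq_one h)
  map_zero' := rfl
  map_add' P Q := by
    rcases P with _ | ⟨x, y, hP⟩
    · simp only [← Point.zero_def, zero_add]
    rcases Q with _ | ⟨u, v, hQ⟩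
    · simp only [← Point.zero_def, add_zero]
    by_cases hneg : x = u ∧ y = (mordellCurve a).negY u v
    · obtain ⟨rfl, hy⟩ := hneg
      rw [Point.add_of_Y_eq rfl hy]
      exact (Point.add_of_Y_eq rfl (by simpa [negY] using hy)).symm
    · rw [Point.add_some hneg, Point.add_some
        (by simpa [hw.ne_zero three_ne_zero, negY] using hneg), Point.some.injEq,
        slope_mul_left hw.pow_eq_one]
      simp only [addX, addY, negAddY, negY]
      generalize (mordellCurve a).slope x u y v = ℓ
      constructor
      · linear_combination -w * ℓ ^ 2 * hw.pow_eq_one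
      · linear_combination ℓ * (ℓ ^ 2 * w ^ 3 + ℓ ^ 2 - 2 * x - u) * hw.pow_eq_one

variable (hw : IsPrimitiveRoot w 3) {P Q : (mordellCurve a).Point}

@[simp]
lemma pointX_cubeRootMul (P : (mordellCurve a).Point) :
    pointX (cubeRootMul hw P) = w * pointX P := by
  cases P with
  | zero => exact (mul_zero w).symm
  | some x y h => rfl

@[simp]
lemma pointY_cubeRootMul (P : (mordellCurve a).Point) :
    pointY (cubeRootMul hw P) = pointY P := by
  cases P <;> rfl

lemma cubeRootMul_ne_zero (hP : P ≠ 0) : cubeRootMul hw P ≠ 0 := by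
  induction P, hP using point_induction_of_ne_zero with
  | some x y h => exact Point.some_ne_zero _

lemma add_cubeRootMul_add_cubeRootMul (P : (mordellCurve a).Point) :
    P + cubeRootMul hw P + cubeRootMul hw (cubeRootMul hw P) = 0 := by
  rcases P with _ | ⟨x, y, h⟩
  · simp only [← Point.zero_def, map_zero, add_zero]
  rw [← eq_neg_iff_add_eq_zero]
  change Point.some x y h + Point.some (w * x) y _ = -Point.some (w * (w * x)) y _
  rw [Point.add_some (not_eq_mul_left_and_eq_negY hw h), Point.neg_some, Point.some.injEq]
  simp only [addX, addY, negAddY, negY, slope_mul_left_eq_zero hw h]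
  constructor
  · linear_combination -x * sq_add_add_one_eq_zero_of_isPrimitiveRoot_three hw
  · ring

@[simp]
lemma cubeRootMul_cubeRootMul_cubeRootMul (P : (mordellCurve a).Point) :
    cubeRootMul hw (cubeRootMul hw (cubeRootMul hw P)) = P :=
  map_map_map_eq_self (add_cubeRootMul_add_cubeRootMul hw) P

lemma cubeRootMul_eq_self_iff (hP : P ≠ 0) : cubeRootMul hw P = P ↔ pointY P ^ 2 = a := by
  rw [pointY_sq hP, add_eq_right, pow_eq_zero_iff three_ne_zero]
  constructor
  · intro h
    have hX := congrArg pointX h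
    rw [pointX_cubeRootMul] at hX
    have : (w - 1) * pointX P = 0 := by linear_combination hX
    exact (mul_eq_zero.mp this).resolve_left (sub_ne_zero.mpr (hw.ne_one (by norm_num)))
  · intro h
    exact point_eq_of_coords_eq (cubeRootMul_ne_zero hw hP) hP (by simp [h]) (by simp)

lemma pointY_eq_iff (hP : P ≠ 0) (hQ : Q ≠ 0) : pointY P = pointY Q ↔
    P = Q ∨ P = cubeRootMul hw Q ∨ P = cubeRootMul hw (cubeRootMul hw Q) := by
  constructor
  · intro h
    have hcube : pointX P ^ 3 = pointX Q ^ 3 := by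
      linear_combination (pointY P + pointY Q) * h - pointY_sq hP + pointY_sq hQ
    have hprod : (pointX P - pointX Q) * ((pointX P - w * pointX Q) *
        (pointX P - w * (w * pointX Q))) = 0 := by
      linear_combination hcube - (pointX Q * pointX P ^ 2 - w * pointX Q ^ 2 * pointX P
        + (w - 1) * pointX Q ^ 3) * sq_add_add_one_eq_zero_of_isPrimitiveRoot_three hw
    simp only [mul_eq_zero, sub_eq_zero] at hprod
    refine hprod.imp (fun hX ↦ ?_) (.imp (fun hX ↦ ?_) fun hX ↦ ?_) <;>
      apply point_eq_of_coords_eq <;> simp [hP, hQ, cubeRootMul_ne_zero, hX, h]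
  · rintro (rfl | rfl | rfl) <;> simp

end MordellCurve

section FractionSum

variable {F : Type*} [Field F]

lemma exists_natDegree_eq_and_eval_eq_mul_prod {S : Finset F} {e : F → ℕ} {R : F → F[X]}
    (hR : ∀ b ∈ S, (R b).natDegree ≤ e b) :
    ∃ N : F[X], N.natDegree = ∑ b ∈ S, e b + 1 ∧ ∀ y, (∀ b ∈ S, y + b ≠ 0) →
      N.eval y = (y + ∑ b ∈ S, (R b).eval y / (y + b) ^ e b) * ∏ b ∈ S, (y + b) ^ e b := by
  classical
  let D := fun T : Finset F ↦ ∏ b ∈ T, (X + C b) ^ e b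
  have hmonic (T : Finset F) : (D T).Monic :=
    monic_prod_of_monic _ _ fun b _ ↦ (monic_X_add_C b).pow _
  have hdeg (T : Finset F) : (D T).natDegree = ∑ b ∈ T, e b := by
    simp [D, natDegree_prod_of_monic _ _ fun b _ ↦ (monic_X_add_C b).pow _]
  have hlow : (∑ b ∈ S, R b * D (S.erase b)).natDegree ≤ ∑ b ∈ S, e b := by
    refine natDegree_sum_le_of_forall_le _ _ fun b hb ↦ natDegree_mul_le.trans ?_
    rw [hdeg, ← add_sum_erase S e hb]
    exact Nat.add_le_add_right (hR b hb) _
  have hhigh : (X * D S).natDegree = ∑ b ∈ S, e b + 1 := by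
    rw [natDegree_X_mul (hmonic S).ne_zero, hdeg]
  refine ⟨X * D S + ∑ b ∈ S, R b * D (S.erase b), ?_, fun y hy ↦ ?_⟩
  · rw [natDegree_add_eq_left_of_natDegree_lt (by rw [hhigh]; exact Nat.lt_succ_of_le hlow), hhigh]
  · simp only [D, eval_add, eval_mul, eval_X, eval_finsetSum, eval_prod, eval_pow, eval_C]
    rw [add_mul, sum_mul]
    congr 1
    refine sum_congr rfl fun b hb ↦ ?_
    rw [← mul_prod_erase S _ hb, ← mul_assoc, div_mul_cancel₀ _ (pow_ne_zero _ (hy b hb))]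

end FractionSum

section TranslateSum

open WeierstrassCurve.Affine CoordinateRing
open scoped Polynomial.Bivariate

variable {F : Type*} [Field F] {a w : F}

/-- The numerator of the mean of the `Y`-coordinates of `P + T`, `P + ωT` and `P + ω²T` over the
common denominator `(pointY P + b) ^ 3`, as a polynomial in `pointY P`, where `b = pointY T` and
`ω` is an automorphism of order `3`. -/
noncomputable def orbitMeanNum (a b : F) : F[X] :=
  C b * X ^ 3 + C (6 * a - 7 * b ^ 2) * X ^ 2 + C (b ^ 3 - 6 * a * b) * X
    + C (6 * a * b ^ 2 - 9 * a ^ 2)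

lemma natDegree_orbitMeanNum_le (a b : F) : (orbitMeanNum a b).natDegree ≤ 3 :=
  natDegree_cubic_le

lemma sum_cubeRoot_orbit_eq (hw : IsPrimitiveRoot w 3) {f : F → F} {x y v : F}
    (hf : ∀ u, f u = (2 * x + u) * (x ^ 2 + x * u + u ^ 2) * (y + v) ^ 2
      - (x ^ 2 + x * u + u ^ 2) ^ 3 - y * (y + v) ^ 3) (u : F) :
    f u + f (w * u) + f (w * (w * u)) = 3 * ((2 * x ^ 3 + u ^ 3) * (y + v) ^ 2
      - (x ^ 6 + 7 * x ^ 3 * u ^ 3 + u ^ 6) - y * (y + v) ^ 3) := by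
  have h1 := sq_add_add_one_eq_zero_of_isPrimitiveRoot_three hw
  have h2 : 1 + w ^ 2 + w ^ 4 = 0 := by linear_combination (w ^ 2 - w + 1) * h1
  have h3 := hw.pow_eq_one
  have h4 : 1 + w ^ 4 + w ^ 8 = 0 := by linear_combination (w ^ 4 - w ^ 2 + 1) * h2
  have h5 : 1 + w ^ 5 + w ^ 10 = 0 := by
    linear_combination h1 + (w ^ 2 + w * (w ^ 6 + w ^ 3 + 1)) * h3
  rw [hf, hf, hf]
  linear_combination
    (3 * x ^ 2 * (y + v) ^ 2 - 3 * x ^ 5) * u * h1 + (3 * x * (y + v) ^ 2 - 6 * x ^ 4) * u ^ 2 * h2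
      + ((y + v) ^ 2 - 7 * x ^ 3) * u ^ 3 * (w ^ 3 + 2) * h3 - 6 * x ^ 2 * u ^ 4 * h4
      - 3 * x * u ^ 5 * h5 - u ^ 6 * (w ^ 3 + 1) * (w ^ 6 + 2) * h3

variable [DecidableEq F]

/-- The sum of the `Y`-coordinates of the translates of `P` by the elements of `H`. -/
noncomputable def translateSum (H : AddSubgroup (mordellCurve a).Point) [Fintype H]
    (P : (mordellCurve a).Point) : F :=
  ∑ T : H, pointY (P + (T : (mordellCurve a).Point))

variable {H : AddSubgroup (mordellCurve a).Point} {P T : (mordellCurve a).Point}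

lemma translateSum_eq_of_mk_eq [Fintype H] {Q : (mordellCurve a).Point}
    (h : (Q : (mordellCurve a).Point ⧸ H) = P) : translateSum H Q = translateSum H P := by
  obtain ⟨T, hT, rfl⟩ : ∃ T ∈ H, P + T = Q :=
    ⟨-P + Q, QuotientAddGroup.eq.mp h.symm, add_neg_cancel_left P Q⟩
  simp only [translateSum, add_assoc]
  exact Fintype.sum_equiv (Equiv.addLeft (⟨T, hT⟩ : H)) _ _ fun _ ↦ rfl

lemma translateSum_neg [Fintype H] : translateSum H (-P) = -translateSum H P := by
  rw [translateSum, translateSum, ← sum_neg_distrib]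
  exact Fintype.sum_equiv (Equiv.neg H) _ _ fun T ↦ by simp [← pointY_neg, add_comm]

variable [(mordellCurve a).IsElliptic] (hw : IsPrimitiveRoot w 3)

lemma sum_pointY_add_orbit (hP : P ≠ 0) (hT : T ≠ 0) (h : pointY P + pointY T ≠ 0) :
    (pointY (P + T) + pointY (P + cubeRootMul hw T)
      + pointY (P + cubeRootMul hw (cubeRootMul hw T))) * (pointY P + pointY T) ^ 3 =
      3 * (orbitMeanNum a (pointY T)).eval (pointY P) := by
  have hT1 := cubeRootMul_ne_zero hw hT
  have hy1 : pointY P + pointY (cubeRootMul hw T) ≠ 0 := by simpa using h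
  have hy2 : pointY P + pointY (cubeRootMul hw (cubeRootMul hw T)) ≠ 0 := by simpa using h
  have e1 := pointY_add hP hT1 hy1
  have e2 := pointY_add hP (cubeRootMul_ne_zero hw hT1) hy2
  simp only [pointX_cubeRootMul, pointY_cubeRootMul] at e1 e2
  rw [add_mul, add_mul, pointY_add hP hT h, e1, e2, sum_cubeRoot_orbit_eq hw (fun _ ↦ rfl)]
  simp only [orbitMeanNum, eval_add, eval_mul, eval_pow, eval_X, eval_C]
  have hxP := pointY_sq hP
  have hxT := pointY_sq hT
  generalize pointX P = x at *
  generalize pointX T = u at *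
  generalize pointY P = y at *
  generalize pointY T = v at *
  linear_combination -(6 * (y + v) ^ 2 - 3 * (x ^ 3 + y ^ 2 - a) - 21 * u ^ 3) * hxP
    - (3 * (y + v) ^ 2 - 21 * (y ^ 2 - a) - 3 * (u ^ 3 + v ^ 2 - a)) * hxT

lemma pointY_add_pointY_ne_zero (hH : H ≤ H.comap (cubeRootMul hw)) (hP : P ∉ H) (hT : T ∈ H)
    (hT0 : T ≠ 0) : pointY P + pointY T ≠ 0 := by
  have hP0 : P ≠ 0 := fun h ↦ hP (h ▸ H.zero_mem)
  rw [Ne, ← eq_neg_iff_add_eq_zero, ← pointY_neg, pointY_eq_iff hw hP0 (neg_ne_zero.mpr hT0)]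
  have h1 := hH (H.neg_mem hT)
  rintro (h | h | h)
  · exact hP (h ▸ H.neg_mem hT)
  · exact hP (h ▸ h1)
  · exact hP (h ▸ hH h1)

lemma bijOn_cubeRootMul (hH : H ≤ H.comap (cubeRootMul hw)) :
    Set.BijOn (cubeRootMul hw) (H : Set (mordellCurve a).Point) H := by
  refine ⟨fun T hT ↦ hH hT, fun T _ T' _ h ↦ ?_, fun T hT ↦ ⟨_, hH (hH hT), by simp⟩⟩
  rw [← cubeRootMul_cubeRootMul_cubeRootMul hw T, h, cubeRootMul_cubeRootMul_cubeRootMul]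

variable [Fintype H]

lemma sum_comp_cubeRootMul {M : Type*} [AddCommMonoid M] (hH : H ≤ H.comap (cubeRootMul hw))
    (f : (mordellCurve a).Point → M) :
    ∑ T : H, f (cubeRootMul hw T) = ∑ T : H, f T :=
  (bijOn_cubeRootMul hw hH).equiv.sum_comp fun T ↦ f T

lemma translateSum_eq_pointY_add_sum (hH : H ≤ H.comap (cubeRootMul hw)) (hP : P ∉ H) :
    translateSum H P = pointY P + ∑ T ∈ univ.erase (0 : H),
      (orbitMeanNum a (pointY T.1)).eval (pointY P) / (pointY P + pointY T.1) ^ 3 := by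
  have hP0 : P ≠ 0 := fun h ↦ hP (h ▸ H.zero_mem)
  let f (T : (mordellCurve a).Point) : F := pointY (P + T)
  have horbit (T : H) (hT : T ∈ univ.erase (0 : H)) :
      f T + f (cubeRootMul hw T) + f (cubeRootMul hw (cubeRootMul hw T)) =
        3 * ((orbitMeanNum a (pointY T.1)).eval (pointY P) / (pointY P + pointY T.1) ^ 3) := by
    have hT0 : T.1 ≠ 0 := by simpa using hT
    have hy := pointY_add_pointY_ne_zero hw hH hP T.2 hT0
    rw [← mul_div_assoc, eq_div_iff (pow_ne_zero 3 hy)]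
    exact sum_pointY_add_orbit hw hP0 hT0 hy
  apply mul_left_cancel₀ (isElliptic_mordellCurve_iff.mp ‹_›).2.1
  calc 3 * translateSum H P
      = ∑ T : H, (f T + f (cubeRootMul hw T) + f (cubeRootMul hw (cubeRootMul hw T))) := by
        rw [sum_add_distrib, sum_add_distrib, sum_comp_cubeRootMul hw hH f,
          sum_comp_cubeRootMul hw hH (fun T ↦ f (cubeRootMul hw T)), sum_comp_cubeRootMul hw hH f]
        simp only [translateSum, f]
        ring
    _ = _ := by
        rw [← add_sum_erase _ _ (mem_univ (0 : H)), sum_congr rfl horbit, mul_add, mul_sum]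
        simp only [f, ZeroMemClass.coe_zero, map_zero, add_zero]
        ring

lemma card_filter_pointY_eq (hH : H ≤ H.comap (cubeRootMul hw)) {T : H} (hT : T ≠ 0) :
    #{T' ∈ univ.erase (0 : H) | pointY T'.1 = pointY T.1} =
      if pointY T.1 ^ 2 = a then 1 else 3 := by
  have hT0 : T.1 ≠ 0 := by simpa using hT
  let T₁ : H := ⟨_, hH T.2⟩
  let T₂ : H := ⟨_, hH T₁.2⟩
  have hT₁ : T₁.1 ≠ 0 := cubeRootMul_ne_zero hw hT0
  have hfibre : ({T' ∈ univ.erase (0 : H) | pointY T'.1 = pointY T.1} : Finset H) =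
      {T, T₁, T₂} := by
    ext T'
    simp only [mem_filter, mem_erase, mem_univ, and_true, mem_insert, mem_singleton]
    constructor
    · rintro ⟨hT', h⟩
      simpa only [Subtype.ext_iff] using (pointY_eq_iff hw (by simpa using hT') hT0).mp h
    · have hT₂ : T₂.1 ≠ 0 := cubeRootMul_ne_zero hw hT₁
      rintro (rfl | rfl | rfl)
      · exact ⟨hT, rfl⟩
      · exact ⟨ne_of_apply_ne Subtype.val hT₁, pointY_cubeRootMul hw T.1⟩
      · exact ⟨ne_of_apply_ne Subtype.val hT₂, by simp [T₁, T₂]⟩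
  have hfix : T₁ = T ↔ pointY T.1 ^ 2 = a := by
    rw [Subtype.ext_iff, cubeRootMul_eq_self_iff hw hT0]
  have hfix₁ : T₂ = T₁ ↔ pointY T.1 ^ 2 = a := by
    rw [Subtype.ext_iff, cubeRootMul_eq_self_iff hw hT₁, pointY_cubeRootMul]
  rw [hfibre]
  split_ifs with h
  · rw [hfix₁.mpr h, hfix.mpr h]
    simp
  · refine card_eq_three.mpr ⟨T, T₁, T₂, Ne.symm (mt hfix.mp h), ?_, Ne.symm (mt hfix₁.mp h), rfl⟩
    exact fun h2 ↦ h <| hfix.mp <| Subtype.ext <|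
      (congrArg (fun T' : H ↦ cubeRootMul hw T'.1) h2).trans
        (cubeRootMul_cubeRootMul_cubeRootMul hw T.1)

lemma exists_eval_eq_card_mul_orbitMean (hH : H ≤ H.comap (cubeRootMul hw)) {T : H} (hT : T ≠ 0) :
    ∃ R : F[X], R.natDegree ≤ #{T' ∈ univ.erase (0 : H) | pointY T'.1 = pointY T.1} ∧
      ∀ y, y + pointY T.1 ≠ 0 → R.eval y =
        #{T' ∈ univ.erase (0 : H) | pointY T'.1 = pointY T.1} •
          ((orbitMeanNum a (pointY T.1)).eval y / (y + pointY T.1) ^ 3) *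
            (y + pointY T.1) ^ #{T' ∈ univ.erase (0 : H) | pointY T'.1 = pointY T.1} := by
  rw [card_filter_pointY_eq hw hH hT]
  generalize pointY T.1 = b
  split_ifs with hb
  · refine ⟨C b * X + C (-3 * b ^ 2), natDegree_linear_le, fun y hy ↦ ?_⟩
    rw [one_smul, pow_one, div_mul_eq_mul_div, eq_div_iff (pow_ne_zero 3 hy), ← hb]
    simp only [orbitMeanNum, eval_add, eval_mul, eval_pow, eval_X, eval_C]
    ring
  · refine ⟨3 • orbitMeanNum a b, ?_, fun y hy ↦ ?_⟩
    · exact (natDegree_smul_le _ _).trans (natDegree_orbitMeanNum_le a b)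
    · rw [eval_smul, smul_mul_assoc, div_mul_cancel₀ _ (pow_ne_zero 3 hy)]

lemma exists_natDegree_eq_card_and_eval_eq_translateSum_mul
    (hH : H ≤ H.comap (cubeRootMul hw)) :
    ∃ N : F[X], N.natDegree = Nat.card H ∧ ∀ P ∉ H,
      N.eval (pointY P) = translateSum H P * ∏ T ∈ univ.erase (0 : H), (pointY P + pointY T.1) := by
  let S : Finset F := (univ.erase (0 : H)).image fun T ↦ pointY T.1
  let e (b : F) : ℕ := #{T ∈ univ.erase (0 : H) | pointY T.1 = b}
  have hterm (b : F) (hb : b ∈ S) : ∃ R : F[X], R.natDegree ≤ e b ∧ ∀ y, y + b ≠ 0 →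
      R.eval y = e b • ((orbitMeanNum a b).eval y / (y + b) ^ 3) * (y + b) ^ e b := by
    obtain ⟨T, hT, rfl⟩ := mem_image.mp hb
    exact exists_eval_eq_card_mul_orbitMean hw hH (ne_of_mem_erase hT)
  choose! R hRdeg hR using hterm
  obtain ⟨N, hdeg, hN⟩ := exists_natDegree_eq_and_eval_eq_mul_prod hRdeg
  have hcard : ∑ b ∈ S, e b + 1 = Nat.card H := by
    rw [← card_eq_sum_card_image, card_erase_add_one (mem_univ _), card_univ,
      Nat.card_eq_fintype_card]
  refine ⟨N, hdeg.trans hcard, fun P hP ↦ ?_⟩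
  have hy (b : F) (hb : b ∈ S) : pointY P + b ≠ 0 := by
    obtain ⟨T, hT, rfl⟩ := mem_image.mp hb
    exact pointY_add_pointY_ne_zero hw hH hP T.2 (by simpa using hT)
  rw [hN _ hy, translateSum_eq_pointY_add_sum hw hH hP]
  congr 1
  · rw [sum_comp (fun b ↦ (orbitMeanNum a b).eval (pointY P) / (pointY P + b) ^ 3)
      fun T : H ↦ pointY T.1]
    congr 1
    refine sum_congr rfl fun b hb ↦ ?_
    rw [hR b hb _ (hy b hb), mul_div_cancel_right₀ _ (pow_ne_zero _ (hy b hb))]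
  · exact (prod_comp (fun b ↦ pointY P + b) fun T : H ↦ pointY T.1).symm

lemma exists_mem_poleSpace_evalAt_eq_translateSum_mul (hH : H ≤ H.comap (cubeRootMul hw)) :
    ∃ N ∈ poleSpace (mordellCurve a) (3 * Nat.card H),
      ∃ D ∈ poleSpace (mordellCurve a) (3 * Nat.card H - 3),
        (∀ v : F, N - v • D ≠ 0) ∧ ∀ P (hP : P ≠ 0), P ∉ H →
          evalAt (equation_pointX_pointY hP) D ≠ 0 ∧
          evalAt (equation_pointX_pointY hP) N =
            translateSum H P * evalAt (equation_pointX_pointY hP) D := by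
  obtain ⟨N, hN, hNeval⟩ := exists_natDegree_eq_card_and_eval_eq_translateSum_mul hw hH
  let D : F[X] := ∏ T ∈ univ.erase (0 : H), (X + C (pointY T.1))
  have hD : D.natDegree = Nat.card H - 1 := by
    simp [D, natDegree_prod_of_monic _ _ fun _ _ ↦ monic_X_add_C _]
  have hDeval (y : F) : D.eval y = ∏ T ∈ univ.erase (0 : H), (y + pointY T.1) := by
    simp [D, eval_prod]
  refine ⟨aeval (mk (mordellCurve a) Y) N, hN ▸ aeval_mk_Y_mem_poleSpace N,
    aeval (mk (mordellCurve a) Y) D, ?_, fun v ↦ ?_, fun P hP0 hP ↦ ⟨?_, ?_⟩⟩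
  · convert aeval_mk_Y_mem_poleSpace D using 2
    omega
  · rw [← map_smul, ← map_sub]
    refine aeval_mk_Y_ne_zero (sub_ne_zero.mpr fun h ↦ ?_)
    have hdeg := h ▸ natDegree_smul_le v D
    have hpos : 0 < Nat.card H := Nat.card_pos
    omega
  · rw [evalAt_aeval_mk_Y, hDeval]
    exact prod_ne_zero_iff.mpr fun T hT ↦
      pointY_add_pointY_ne_zero hw hH hP T.2 (by simpa using hT)
  · rw [evalAt_aeval_mk_Y, evalAt_aeval_mk_Y, hDeval]
    exact hNeval P hP

end TranslateSum

section CosetOrbits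

variable {A : Type*} [AddCommGroup A]

lemma card_comap_le [Finite A] (f : A →+ A) (H : AddSubgroup A) :
    Nat.card (H.comap f) ≤ Nat.card f.ker * Nat.card H := by
  let g : H.comap f →+ H := f.addSubgroupComap H
  have hker : Nat.card g.ker ≤ Nat.card f.ker :=
    Nat.card_le_card_of_injective
      (fun P ↦ ⟨P.1.1, congrArg Subtype.val (AddMonoidHom.mem_ker.mp P.2)⟩)
      fun _ _ h ↦ Subtype.ext (Subtype.ext (Subtype.mk.inj h))
  calc Nat.card (H.comap f) = Nat.card g.ker * Nat.card g.range := by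
        rw [← AddSubgroup.index_ker, AddSubgroup.card_mul_index]
    _ ≤ Nat.card f.ker * Nat.card H :=
        Nat.mul_le_mul hker (Nat.card_le_card_of_injective _ Subtype.val_injective)

lemma ncard_preimage_mk (H : AddSubgroup A) (S : Set (A ⧸ H)) :
    (QuotientAddGroup.mk ⁻¹' S : Set A).ncard = Nat.card H * S.ncard := by
  rw [← Nat.card_coe_set_eq, ← Nat.card_coe_set_eq, ← Nat.card_prod,
    Nat.card_congr (QuotientAddGroup.preimageMkEquivAddSubgroupProdSet H S)]

variable {φ : A →+ A} {P : A}

lemma ncard_orbit_eq_three (hφ : ∀ P, P + φ P + φ (φ P) = 0) (hP : φ P ≠ P) :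
    ({P, φ P, φ (φ P)} : Set A).ncard = 3 := by
  have hφ3 := map_map_map_eq_self hφ P
  exact Set.ncard_eq_three.mpr ⟨P, φ P, φ (φ P), hP.symm,
    fun h ↦ hP ((congrArg φ h).trans hφ3), fun h ↦ hP (h.trans ((congrArg φ h).trans hφ3)), rfl⟩

lemma ncard_preimage_mk_orbit {H : AddSubgroup A} (hφ : ∀ P, P + φ P + φ (φ P) = 0)
    (hH : H ≤ H.comap φ) (hP : φ P - P ∉ H) :
    (QuotientAddGroup.mk ⁻¹' {(P : A ⧸ H), (φ P : A ⧸ H), (φ (φ P) : A ⧸ H)} : Set A).ncard =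
      3 * Nat.card H := by
  rw [ncard_preimage_mk, mul_comm]
  congr 1
  exact ncard_orbit_eq_three (quotient_map_add_map_map_eq_zero hφ hH)
    fun h ↦ hP ((QuotientAddGroup.eq_iff_sub_mem).mp h)

end CosetOrbits

section Fibres

open WeierstrassCurve.Affine

lemma ncard_le_natDegree_add_one {A F : Type*} [Zero A] [Field F] {K : Set A} [Finite K]
    {f : A → F} {q : F[X]} (hq : q ≠ 0) (hroot : ∀ P ∈ K, P ≠ 0 → q.eval (f P) = 0)
    (hinj : Set.InjOn f (K \ {0})) : K.ncard ≤ q.natDegree + 1 := by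
  classical
  have hsub : (K \ {0}).ncard ≤ q.natDegree := by
    rw [← hinj.ncard_image]
    have himage : f '' (K \ {0}) ⊆ q.roots.toFinset := by
      rintro _ ⟨P, ⟨hP, hP0⟩, rfl⟩
      simpa [hq] using hroot P hP hP0
    calc (f '' (K \ {0})).ncard ≤ #q.roots.toFinset := by
          simpa only [Set.ncard_coe_finset] using Set.ncard_le_ncard himage (finite_toSet _)
      _ ≤ q.natDegree := (Multiset.toFinset_card_le _).trans q.card_roots'
  have := Set.pred_ncard_le_ncard_sdiff_singleton K 0
  omega

lemma even_card_of_neg_mem {G : Type*} [AddCommGroup G] {V : Finset G}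
    (hV : ∀ v ∈ V, v ≠ -v) (hneg : ∀ v ∈ V, -v ∈ V) : Even #V := by
  rw [even_iff_two_dvd, ← ZMod.natCast_eq_zero_iff, ← nsmul_one, ← sum_const]
  exact sum_involution (fun v _ ↦ -v) (fun _ _ ↦ CharTwo.add_self_eq_zero 1)
    (fun v hv _ ↦ (hV v hv).symm) hneg fun v _ ↦ neg_neg v

variable {F : Type*} [Field F] [DecidableEq F] {a w : F}
  [(mordellCurve a).IsElliptic] {H : AddSubgroup (mordellCurve a).Point}
  {P : (mordellCurve a).Point}

lemma card_ker_nsmul_two_le [Finite F] :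
    Nat.card (nsmulAddMonoidHom (α := (mordellCurve a).Point) 2).ker ≤ 4 := by
  have h2 := (isElliptic_mordellCurve_iff.mp ‹_›).1
  have hY (P : (mordellCurve a).Point)
      (hP : P ∈ (nsmulAddMonoidHom (α := (mordellCurve a).Point) 2).ker) : pointY P = 0 := by
    have hneg : -P = P := neg_eq_of_add_eq_zero_left ((two_nsmul P).symm.trans hP)
    have := congrArg pointY hneg
    rw [pointY_neg] at this
    exact (mul_eq_zero.mp (by linear_combination -this)).resolve_left h2
  refine (ncard_le_natDegree_add_one (f := pointX) (q := X ^ 3 + C a)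
    (X_pow_add_C_ne_zero three_pos a) (fun P hP hP0 ↦ ?_) fun P hP Q hQ h ↦ ?_).trans_eq
    (by rw [natDegree_X_pow_add_C])
  · simpa [hY P hP, eq_comm] using pointY_sq hP0
  · exact point_eq_of_coords_eq hP.2 hQ.2 h ((hY P hP.1).trans (hY Q hQ.1).symm)

variable (hw : IsPrimitiveRoot w 3)

lemma card_ker_cubeRootMul_sub_id_le [Finite F] :
    Nat.card (cubeRootMul hw - .id (mordellCurve a).Point).ker ≤ 3 := by
  have hfix (P : (mordellCurve a).Point) (hP0 : P ≠ 0)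
      (hP : P ∈ (cubeRootMul hw - .id (mordellCurve a).Point).ker) : pointY P ^ 2 = a :=
    (cubeRootMul_eq_self_iff hw hP0).mp (sub_eq_zero.mp (AddMonoidHom.mem_ker.mp hP))
  refine (ncard_le_natDegree_add_one (f := pointY) (q := X ^ 2 - C a)
    (X_pow_sub_C_ne_zero two_pos a) (fun P hP hP0 ↦ ?_) fun P hP Q hQ h ↦ ?_).trans_eq
    (by rw [natDegree_X_pow_sub_C])
  · simp [hfix P hP0 hP]
  · have hX (R : (mordellCurve a).Point) (hR0 : R ≠ 0)
        (hR : R ∈ (cubeRootMul hw - .id (mordellCurve a).Point).ker) : pointX R = 0 := by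
      simpa [hfix R hR0 hR] using pointY_sq hR0
    exact point_eq_of_coords_eq hP.2 hQ.2 ((hX P hP.2 hP.1).trans (hX Q hQ.2 hQ.1).symm) h

lemma ncard_two_nsmul_mem_or_cubeRootMul_sub_mem_le [Finite F] :
    {P | 2 • P ∈ H ∨ cubeRootMul hw P - P ∈ H}.ncard ≤ 7 * Nat.card H := by
  let f := nsmulAddMonoidHom (α := (mordellCurve a).Point) 2
  let g := cubeRootMul hw - .id (mordellCurve a).Point
  have hf : (H.comap f : Set (mordellCurve a).Point).ncard ≤ 4 * Nat.card H :=
    (card_comap_le f H).trans (Nat.mul_le_mul_right _ card_ker_nsmul_two_le)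
  have hg : (H.comap g : Set (mordellCurve a).Point).ncard ≤ 3 * Nat.card H :=
    (card_comap_le g H).trans (Nat.mul_le_mul_right _ (card_ker_cubeRootMul_sub_id_le hw))
  have hunion := Set.ncard_union_le (H.comap f : Set (mordellCurve a).Point) (H.comap g)
  exact hunion.trans (by omega)

variable [Fintype H]

lemma translateSum_cubeRootMul (hH : H ≤ H.comap (cubeRootMul hw)) :
    translateSum H (cubeRootMul hw P) = translateSum H P := by
  rw [translateSum, ← sum_comp_cubeRootMul hw hH fun T ↦ pointY (cubeRootMul hw P + T)]
  simp only [← map_add, pointY_cubeRootMul, translateSum]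

lemma ncard_translateSum_eq_le [Finite F] (hH : H ≤ H.comap (cubeRootMul hw)) (v : F) :
    {P | P ∉ H ∧ translateSum H P = v}.ncard ≤ 3 * Nat.card H := by
  obtain ⟨N, hN, D, hD, hne, heval⟩ := exists_mem_poleSpace_evalAt_eq_translateSum_mul hw hH
  cases nonempty_fintype {P | P ∉ H ∧ translateSum H P = v}
  have h0 (P : {P | P ∉ H ∧ translateSum H P = v}) : P.1 ≠ 0 :=
    fun h ↦ P.2.1 (h ▸ H.zero_mem)
  rw [← Nat.card_coe_set_eq, Nat.card_eq_fintype_card, ← card_univ]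
  refine card_le_of_mem_poleSpace (fun P ↦ equation_pointX_pointY (h0 P)) (fun P Q h ↦ ?_)
    (sub_mem hN (Submodule.smul_mem _ v (poleSpace_mono (Nat.sub_le ..) hD))) (hne v)
    fun P _ ↦ ?_
  · rw [Prod.mk.injEq] at h
    exact Subtype.ext (point_eq_of_coords_eq (h0 P) (h0 Q) h.1 h.2)
  · rw [map_sub, map_smul, (heval P (h0 P) P.2.1).2, P.2.2, smul_eq_mul, sub_self]

lemma setOf_translateSum_eq [Finite F] (hH : H ≤ H.comap (cubeRootMul hw))
    (hP : cubeRootMul hw P - P ∉ H) :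
    {Q | Q ∉ H ∧ translateSum H Q = translateSum H P} =
      QuotientAddGroup.mk ⁻¹' {(P : (mordellCurve a).Point ⧸ H), ↑(cubeRootMul hw P),
        ↑(cubeRootMul hw (cubeRootMul hw P))} := by
  have hφ := add_cubeRootMul_add_cubeRootMul (a := a) hw
  refine (Set.eq_of_subset_of_ncard_le ?_ ?_).symm
  · have hmem {Q R : (mordellCurve a).Point} (h : (Q : (mordellCurve a).Point ⧸ H) = R)
        (hR : R ∉ H) (hRP : translateSum H R = translateSum H P) :
        Q ∉ H ∧ translateSum H Q = translateSum H P := by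
      refine ⟨?_, (translateSum_eq_of_mk_eq h).trans hRP⟩
      rwa [← QuotientAddGroup.eq_zero_iff, h, QuotientAddGroup.eq_zero_iff]
    have hP0 : P ∉ H := fun h ↦ hP (sub_mem (hH h) h)
    have hP2 : cubeRootMul hw (cubeRootMul hw P) ∉ H :=
      fun h ↦ hP0 (cubeRootMul_cubeRootMul_cubeRootMul hw P ▸ hH h)
    have hP1 : cubeRootMul hw P ∉ H := fun h ↦ hP2 (hH h)
    rintro Q (h | h | h)
    · exact hmem h hP0 rfl
    · exact hmem h hP1 (translateSum_cubeRootMul hw hH)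
    · exact hmem h hP2 (by rw [translateSum_cubeRootMul hw hH, translateSum_cubeRootMul hw hH])
  · rw [ncard_preimage_mk_orbit hφ hH hP]
    exact ncard_translateSum_eq_le hw hH _

lemma translateSum_ne_zero [Finite F] (hH : H ≤ H.comap (cubeRootMul hw)) (hP2 : 2 • P ∉ H)
    (hP : cubeRootMul hw P - P ∉ H) : translateSum H P ≠ 0 := by
  intro hz
  have hP0 : P ∉ H := fun h ↦ hP (sub_mem (hH h) h)
  have hneg : -P ∈ {Q | Q ∉ H ∧ translateSum H Q = translateSum H P} :=
    ⟨fun h ↦ hP0 (neg_mem_iff.mp h), by rw [translateSum_neg, hz, neg_zero]⟩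
  rw [setOf_translateSum_eq hw hH hP] at hneg
  have hsum := add_cubeRootMul_add_cubeRootMul hw P
  rcases hneg with h | h | h <;> replace h := QuotientAddGroup.eq.mp h
  · exact hP2 (by rwa [neg_neg, ← two_nsmul] at h)
  · rw [neg_neg, eq_neg_of_add_eq_zero_left hsum, neg_mem_iff] at h
    exact hP0 (cubeRootMul_cubeRootMul_cubeRootMul hw P ▸ hH h)
  · have hsum' : P + cubeRootMul hw (cubeRootMul hw P) = -cubeRootMul hw P :=
      eq_neg_of_add_eq_zero_left ((add_right_comm _ _ _).trans hsum)
    rw [neg_neg, hsum', neg_mem_iff] at h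
    exact hP0 (cubeRootMul_cubeRootMul_cubeRootMul hw P ▸ hH (hH h))

lemma exists_finset_ncard_translateSum_eq [Finite F] (hH : H ≤ H.comap (cubeRootMul hw)) :
    ∃ V : Finset F, (∀ v ∈ V, v ≠ -v) ∧ (∀ v ∈ V, -v ∈ V) ∧
      Nat.card (mordellCurve a).Point ≤ 7 * Nat.card H + 3 * Nat.card H * #V ∧
      ∀ v ∈ V, {P | P ∉ H ∧ translateSum H P = v}.ncard = 3 * Nat.card H := by
  classical
  cases nonempty_fintype (mordellCurve a).Point
  let G : Finset (mordellCurve a).Point := {P | ¬(2 • P ∈ H ∨ cubeRootMul hw P - P ∈ H)}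
  have hG {P : (mordellCurve a).Point} : P ∈ G ↔ 2 • P ∉ H ∧ cubeRootMul hw P - P ∉ H := by
    rw [mem_filter_univ, not_or]
  have hfibre : #G ≤ 3 * Nat.card H * #(G.image (translateSum H)) := by
    refine card_le_mul_card_image _ _ fun v _ ↦ le_trans ?_ (ncard_translateSum_eq_le hw hH v)
    rw [← Set.ncard_coe_finset]
    refine Set.ncard_le_ncard fun P hP ↦ ?_
    obtain ⟨hPG, hPv⟩ := mem_filter.mp hP
    exact ⟨fun h ↦ (hG.mp hPG).1 (nsmul_mem h 2), hPv⟩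
  refine ⟨G.image (translateSum H), ?_, ?_, ?_, ?_⟩
  · rintro v hv hneg
    obtain ⟨P, hP, rfl⟩ := mem_image.mp hv
    obtain ⟨hP2, hPsub⟩ := hG.mp hP
    have h2 := (isElliptic_mordellCurve_iff.mp ‹_›).1
    exact translateSum_ne_zero hw hH hP2 hPsub
      ((mul_eq_zero.mp (by linear_combination hneg)).resolve_left h2)
  · rintro v hv
    obtain ⟨P, hP, rfl⟩ := mem_image.mp hv
    refine mem_image.mpr ⟨-P, ?_, translateSum_neg⟩
    have hneg : cubeRootMul hw (-P) - -P = -(cubeRootMul hw P - P) := by rw [map_neg]; abel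
    rwa [hG, smul_neg, hneg, neg_mem_iff, neg_mem_iff, ← hG]
  · rw [← Set.ncard_add_ncard_compl {P | 2 • P ∈ H ∨ cubeRootMul hw P - P ∈ H}]
    refine add_le_add (ncard_two_nsmul_mem_or_cubeRootMul_sub_mem_le hw) (hfibre.trans' ?_)
    rw [← Set.ncard_coe_finset, coe_filter_univ]
    rfl
  · rintro v hv
    obtain ⟨P, hP, rfl⟩ := mem_image.mp hv
    have hPsub := (hG.mp hP).2
    rw [setOf_translateSum_eq hw hH hPsub,
      ncard_preimage_mk_orbit (add_cubeRootMul_add_cubeRootMul hw) hH hPsub]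

end Fibres

section CurveCodes

open WeierstrassCurve.Affine CoordinateRing

variable {F : Type*} [Field F] {W : WeierstrassCurve.Affine F} {n : ℕ} {x y : Fin n → F}

/-- The word of values of the rational function `f / D` at the points `(x i, y i)`. -/
noncomputable def evalDiv (hxy : ∀ i, W.Equation (x i) (y i)) (D : W.CoordinateRing) :
    W.CoordinateRing →ₗ[F] (Fin n → F) :=
  LinearMap.pi fun i ↦ (evalAt (hxy i) D)⁻¹ • (evalAt (hxy i)).toLinearMap

@[simp]
lemma evalDiv_apply (hxy : ∀ i, W.Equation (x i) (y i)) (D f : W.CoordinateRing) (i : Fin n) :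
    evalDiv hxy D f i = evalAt (hxy i) f / evalAt (hxy i) D :=
  (div_eq_inv_mul ..).symm

variable [DecidableEq F] {ζ : Fin n → F} {w m t : ℕ} {N D : W.CoordinateRing}

/-- A function `ζ = N / D` of pole order at most `w` on the curve `W` groups the distinct points
`(x i, y i)` into fibres of size exactly `w`, on each of which the `x`-coordinates are distinct.
The denominator has pole order at most `w - 3`, so that `L((w - 1) O)` contains `D · L(2 O)`. -/
structure IsBlockSystem (W : WeierstrassCurve.Affine F) (x y ζ : Fin n → F) (w : ℕ)
    (N D : W.CoordinateRing) : Prop where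
  equation i : W.Equation (x i) (y i)
  injective : Function.Injective fun i ↦ (x i, y i)
  num_mem : N ∈ poleSpace W w
  den_mem : D ∈ poleSpace W (w - 3)
  sub_smul_ne_zero (v : F) : N - v • D ≠ 0
  evalAt_den_ne_zero i : evalAt (equation i) D ≠ 0
  evalAt_num i : evalAt (equation i) N = ζ i * evalAt (equation i) D
  card_fibre i : #{j | ζ j = ζ i} = w
  injOn_fibre i : Set.InjOn x {j | ζ j = ζ i}

namespace IsBlockSystem

variable {U : Submodule F (Fin n → F)}

lemma size_le (h : IsBlockSystem W x y ζ w N D) (i : Fin n) : w ≤ n := by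
  simpa [h.card_fibre i] using card_le_univ ({j | ζ j = ζ i} : Finset (Fin n))

lemma finrank_map_evalDiv (h : IsBlockSystem W x y ζ w N D) {k : ℕ} (hk : 0 < k)
    (hkn : k < n) {E : W.CoordinateRing}
    (hE : ∀ i, evalAt (h.equation i) E ≠ 0) :
    Module.finrank F ((poleSpace W k).map (evalDiv h.equation E)) = k := by
  rw [← LinearMap.range_domRestrict, LinearMap.finrank_range_of_inj, finrank_poleSpace hk]
  refine (injective_iff_map_eq_zero _).mpr fun ⟨f, hf⟩ hf0 ↦ Subtype.ext <| by_contra fun hne ↦ ?_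
  refine hkn.not_ge ?_
  simpa using card_le_of_mem_poleSpace h.equation h.injective hf hne (S := univ) fun i _ ↦ by
    simpa [hE i] using congrFun hf0 i

lemma exists_mem_poleSpace_evalAt_eq_pow_mul (h : IsBlockSystem W x y ζ w N D)
    (hU : U ≤ (poleSpace W w).map (evalDiv h.equation D)) {c : Fin n → F}
    (hc : c ∈ blockCode ζ U t) :
    ∃ f ∈ poleSpace W (w * t), ∀ i,
      evalAt (h.equation i) f = evalAt (h.equation i) D ^ t * c i := by
  obtain ⟨⟨b, g⟩, rfl⟩ := hc
  choose f hf hfg using fun k ↦ Submodule.mem_map.mp (hU (g k).2)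
  refine ⟨b • N ^ t + ∑ k : Fin t, N ^ (k : ℕ) * D ^ (t - 1 - k) * f k,
    add_mem (Submodule.smul_mem _ _ (pow_mem_poleSpace h.num_mem t))
      (sum_mem fun k _ ↦ ?_), fun i ↦ ?_⟩
  · have hD := poleSpace_mono (Nat.sub_le w 3) h.den_mem
    have hk : w * k + w * (t - 1 - k) + w = w * t := by
      rw [← mul_add, ← Nat.mul_succ]
      congr 1
      omega
    exact hk ▸ mul_mem_poleSpace
      (mul_mem_poleSpace (pow_mem_poleSpace h.num_mem k) (pow_mem_poleSpace hD _)) (hf k)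
  · rw [blockWord_apply_apply, map_add, map_sum, map_smul, map_pow, h.evalAt_num, mul_add, mul_sum]
    refine congrArg₂ _ (by rw [smul_eq_mul]; ring) (sum_congr rfl fun k _ ↦ ?_)
    have hpow : evalAt (h.equation i) D ^ t =
        evalAt (h.equation i) D ^ (k : ℕ) * evalAt (h.equation i) D ^ (t - 1 - k) *
          evalAt (h.equation i) D := by
      rw [← pow_add, ← pow_succ]
      congr 1
      omega
    rw [← hfg, evalDiv_apply, map_mul, map_mul, map_pow, map_pow, h.evalAt_num, hpow]
    field [h.evalAt_den_ne_zero i]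

lemma card_zeros_le (h : IsBlockSystem W x y ζ w N D)
    (hU : U ≤ (poleSpace W w).map (evalDiv h.equation D)) {c : Fin n → F}
    (hc : c ∈ blockCode ζ U t) (hc0 : c ≠ 0) : #{i | c i = 0} ≤ w * t := by
  obtain ⟨f, hf, hfc⟩ := h.exists_mem_poleSpace_evalAt_eq_pow_mul hU hc
  refine card_le_of_mem_poleSpace h.equation h.injective hf ?_ fun i hi ↦ by
    rw [hfc, (mem_filter.mp hi).2, mul_zero]
  rintro rfl
  exact hc0 (funext fun i ↦ by simpa [h.evalAt_den_ne_zero i] using (hfc i).symm)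

lemma card_zeros_fibre_lt_sub_two (h : IsBlockSystem W x y ζ w N D) (hw : 3 ≤ w)
    {f : W.CoordinateRing} (hf : f ∈ poleSpace W (w - 2)) (hf0 : f ≠ 0) (i : Fin n) :
    #{j | ζ j = ζ i ∧ evalAt (h.equation j) f = 0} < w - 2 := by
  have hcard := h.card_fibre i
  refine (card_lt_of_mem_poleSpace h.equation (S := {j | ζ j = ζ i}) (f := N - ζ i • D)
    (by simpa using h.injOn_fibre i) (hcard.symm ▸ hw)
    (monotone_filter_right _ fun _ _ hj ↦ hj.1) ?_ (h.sub_smul_ne_zero _)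
    (hcard.symm ▸ hf) hf0 (fun j hj ↦ ?_) fun j hj ↦ (mem_filter.mp hj).2.2).trans_eq
      (by rw [hcard])
  · exact hcard.symm ▸ sub_mem h.num_mem
      (Submodule.smul_mem _ _ (poleSpace_mono (Nat.sub_le w 3) h.den_mem))
  · rw [map_sub, map_smul, h.evalAt_num, (mem_filter.mp hj).2, smul_eq_mul, sub_self]

lemma card_zeros_fibre_lt_two (h : IsBlockSystem W x y ζ w N D) {f : W.CoordinateRing}
    (hf : f ∈ poleSpace W 2) (hf0 : f ≠ 0) (i : Fin n) :
    #{j | ζ j = ζ i ∧ evalAt (h.equation j) f = 0} < 2 := by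
  by_contra! hcard
  obtain ⟨p, q, rfl⟩ := exists_smul_basis_eq f
  rw [smul_basis_mem_poleSpace, two_nsmul_degree_le_iff, two_nsmul_degree_add_three_le_iff] at hf
  have hq : q = 0 :=
    degree_eq_bot.mp (Nat.WithBot.lt_zero_iff.mp (by simpa using hf.2))
  have hp : p = 0 := by
    refine eq_zero_of_degree_lt_of_eval_index_eq_zero (v := x) _ ?_
      (hf.1.trans_le (Nat.cast_le.mpr hcard)) fun j hj ↦ ?_
    · exact (h.injOn_fibre i).mono fun j hj ↦ (mem_filter.mp hj).2.1
    · simpa only [hq, evalAt_smul_basis, eval_zero, zero_mul, add_zero] using (mem_filter.mp hj).2.2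
  exact hf0 (by rw [hp, hq, zero_smul, zero_smul, add_zero])

theorem existsOptimalLRC_sub_two (h : IsBlockSystem W x y ζ w N D) (hw : 3 ≤ w)
    (himage : #(univ.image ζ) = m) (htm : t < m) :
    ExistsOptimalLRC F n ((w - 2) * t + 1) (w * (m - t)) (w - 2) 3 := by
  obtain ⟨i, -⟩ := image_nonempty.mp (card_pos.mp (himage.symm ▸ htm.pos))
  have hwn := h.size_le i
  have hD := h.evalAt_den_ne_zero
  have hlrc := existsOptimalLRC_of_fibers (U := (poleSpace W (w - 2)).map (evalDiv h.equation D))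
    ⟨D, poleSpace_mono (by omega) h.den_mem, funext fun i ↦ by simp [hD]⟩
    (h.finrank_map_evalDiv (by omega) (by omega) hD) (Nat.sub_le w 2) h.card_fibre himage htm ?_
    fun c hc hc0 ↦ h.card_zeros_le (Submodule.map_mono (poleSpace_mono (Nat.sub_le w 2))) hc hc0
  · rwa [show w + 1 - (w - 2) = 3 by omega] at hlrc
  · rintro _ ⟨f, hf, rfl⟩ hf0 i
    simpa [hD] using h.card_zeros_fibre_lt_sub_two hw hf (fun hf ↦ hf0 (by rw [hf, map_zero])) i

theorem existsOptimalLRC_two (h : IsBlockSystem W x y ζ w N D) (hw : 3 ≤ w)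
    (himage : #(univ.image ζ) = m) (htm : t < m) :
    ExistsOptimalLRC F n (2 * t + 1) (w * (m - t)) 2 (w - 1) := by
  obtain ⟨i, -⟩ := image_nonempty.mp (card_pos.mp (himage.symm ▸ htm.pos))
  have hwn := h.size_le i
  refine existsOptimalLRC_of_fibers (U := (poleSpace W 2).map (evalDiv h.equation 1))
    ⟨1, poleSpace_mono (Nat.zero_le 2) one_mem_poleSpace, funext fun i ↦ by simp⟩
    (h.finrank_map_evalDiv two_pos (by omega) (by simp)) (by omega) h.card_fibre himage htm ?_
    fun c hc hc0 ↦ h.card_zeros_le ?_ hc hc0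
  · rintro _ ⟨f, hf, rfl⟩ hf0 i
    simpa using h.card_zeros_fibre_lt_two hf (fun hf ↦ hf0 (by rw [hf, map_zero])) i
  · rintro _ ⟨f, hf, rfl⟩
    exact ⟨f * D, poleSpace_mono (by omega) (mul_mem_poleSpace hf h.den_mem),
      funext fun i ↦ by simp [h.evalAt_den_ne_zero]⟩

end IsBlockSystem

end CurveCodes

section MordellCodes

lemma exists_fin_card_fibre_eq {Ω κ : Type*} [Finite Ω] [DecidableEq κ] {R : Set Ω} {z : Ω → κ}
    {V : Finset κ} {w : ℕ} (hw : 0 < w) (hV : ∀ v ∈ V, {P | P ∈ R ∧ z P = v}.ncard = w) :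
    ∃ P : Fin (w * #V) → Ω, Function.Injective P ∧ (∀ i, P i ∈ R) ∧
      univ.image (z ∘ P) = V ∧ ∀ i, #{j | z (P j) = z (P i)} = w := by
  classical
  cases nonempty_fintype Ω
  let S : Finset Ω := {P | P ∈ R ∧ z P ∈ V}
  have hmem {P : Ω} : P ∈ S ↔ P ∈ R ∧ z P ∈ V := mem_filter_univ _
  have hSv : ∀ v ∈ V, #{P ∈ S | z P = v} = w := by
    intro v hv
    rw [← hV v hv, ← Set.ncard_coe_finset]
    congr 1
    ext P
    rw [mem_coe, mem_filter, hmem]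
    exact ⟨fun h ↦ ⟨h.1.1, h.2⟩, fun h ↦ ⟨⟨h.1, h.2 ▸ hv⟩, h.2⟩⟩
  have hS : #S = w * #V := by
    rw [card_eq_sum_card_fiberwise (f := z) (t := V) fun P hP ↦ (hmem.mp hP).2,
      sum_congr rfl hSv, sum_const, smul_eq_mul, mul_comm]
  let P (i : Fin (w * #V)) : Ω := (S.equivFinOfCardEq hS).symm i
  have hinj : Function.Injective P := Subtype.val_injective.comp (Equiv.injective _)
  have hPS (i) : P i ∈ S := ((S.equivFinOfCardEq hS).symm i).2
  have himage : univ.image P = S := by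
    refine eq_of_subset_of_card_le (image_subset_iff.mpr fun i _ ↦ hPS i) ?_
    rw [card_image_of_injective _ hinj, hS, card_fin]
  refine ⟨P, hinj, fun i ↦ (hmem.mp (hPS i)).1, ?_, fun i ↦ ?_⟩
  · rw [← image_image, himage]
    refine (image_subset_iff.mpr fun Q hQ ↦ (hmem.mp hQ).2).antisymm fun v hv ↦ ?_
    obtain ⟨Q, hQ⟩ := card_pos.mp (hw.trans_eq (hSv v hv).symm)
    exact mem_image.mpr ⟨Q, mem_filter.mp hQ⟩
  · refine Eq.trans ?_ (hSv _ (hmem.mp (hPS i)).2)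
    rw [← himage, filter_image, card_image_of_injective _ hinj]

variable {F : Type*} [Field F] [Finite F] [DecidableEq F] {a w : F}
  [(mordellCurve a).IsElliptic] {H : AddSubgroup (mordellCurve a).Point}
  (hw : IsPrimitiveRoot w 3)

theorem exists_isBlockSystem [Fintype H] (hH : H ≤ H.comap (cubeRootMul hw)) {V : Finset F}
    (hV : ∀ v ∈ V, v ≠ -v)
    (hfibre : ∀ v ∈ V, {P | P ∉ H ∧ translateSum H P = v}.ncard = 3 * Nat.card H) :
    ∃ (x y ζ : Fin (3 * Nat.card H * #V) → F) (N D : (mordellCurve a).CoordinateRing),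
      IsBlockSystem (mordellCurve a) x y ζ (3 * Nat.card H) N D ∧ univ.image ζ = V := by
  obtain ⟨N, hN, D, hD, hne, heval⟩ := exists_mem_poleSpace_evalAt_eq_translateSum_mul hw hH
  obtain ⟨P, hinj, hPH, himage, hcard⟩ :=
    exists_fin_card_fibre_eq (R := {P | P ∉ H}) (Nat.mul_pos three_pos Nat.card_pos) hfibre
  have h0 (i) : P i ≠ 0 := fun h ↦ hPH i (h ▸ H.zero_mem)
  refine ⟨pointX ∘ P, pointY ∘ P, translateSum H ∘ P, N, D,
    { equation i := equation_pointX_pointY (h0 i)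
      injective i j h := hinj (point_eq_of_coords_eq (h0 i) (h0 j) (Prod.mk.inj h).1
        (Prod.mk.inj h).2)
      num_mem := hN
      den_mem := hD
      sub_smul_ne_zero := hne
      evalAt_den_ne_zero i := (heval _ (h0 i) (hPH i)).1
      evalAt_num i := (heval _ (h0 i) (hPH i)).2
      card_fibre := hcard
      injOn_fibre i j hj k hk hx := ?_ }, himage⟩
  refine hinj (((pointX_eq_iff (h0 j) (h0 k)).mp hx).resolve_right fun hneg ↦ ?_)
  refine hV (translateSum H (P k)) (himage.subset (mem_image_of_mem _ (mem_univ k))) ?_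
  exact (hk.trans hj.symm).trans ((congrArg _ hneg).trans translateSum_neg)

lemma le_card_of_le_two_mul_ceil {c h k m : ℕ} (hh : 0 < h) (hk : Even k)
    (hc : c ≤ 7 * h + 3 * h * k) (hm : (m : ℤ) ≤ 2 * ⌈((c : ℚ) - 8 * h) / (6 * h)⌉) : m ≤ k := by
  obtain ⟨j, rfl⟩ := hk
  have hcQ : (c : ℚ) ≤ 7 * h + 3 * h * (j + j) := by exact_mod_cast hc
  have hhQ : (0 : ℚ) < h := by exact_mod_cast hh
  have hceil : ⌈((c : ℚ) - 8 * h) / (6 * h)⌉ ≤ (j : ℤ) := by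
    rw [Int.ceil_le, div_le_iff₀ (by positivity), Int.cast_natCast]
    linarith
  omega

theorem existsOptimalLRC_of_le_comap_cubeRootMul (hH : H ≤ H.comap (cubeRootMul hw)) {t m : ℕ}
    (htm : t < m) (hm : (m : ℤ) ≤
      2 * ⌈((Nat.card (mordellCurve a).Point : ℚ) - 8 * Nat.card H) / (6 * Nat.card H)⌉) :
    ExistsOptimalLRC F (3 * Nat.card H * m) ((3 * Nat.card H - 2) * t + 1)
      (3 * Nat.card H * (m - t)) (3 * Nat.card H - 2) 3 ∧
    ExistsOptimalLRC F (3 * Nat.card H * m) (2 * t + 1)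
      (3 * Nat.card H * (m - t)) 2 (3 * Nat.card H - 1) := by
  cases nonempty_fintype H
  have hH0 : 0 < Nat.card H := Nat.card_pos
  obtain ⟨V, hne, hneg, hcard, hfibre⟩ := exists_finset_ncard_translateSum_eq hw hH
  have hmV := le_card_of_le_two_mul_ceil hH0 (even_card_of_neg_mem hne hneg) hcard hm
  obtain ⟨V', hV', rfl⟩ := exists_subset_card_eq hmV
  obtain ⟨x, y, ζ, N, D, hblock, himage⟩ :=
    exists_isBlockSystem hw hH (fun v hv ↦ hne v (hV' hv)) fun v hv ↦ hfibre v (hV' hv)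
  have hsize : 3 ≤ 3 * Nat.card H := by omega
  exact ⟨hblock.existsOptimalLRC_sub_two hsize (congrArg card himage) htm,
    hblock.existsOptimalLRC_two hsize (congrArg card himage) htm⟩

end MordellCodes

section Existence

lemma exists_isElliptic_mordellCurve_card_point {p s : ℕ} (hp : p.Prime) (hodd : Odd p)
    (hp3 : p % 3 = 2) {F : Type*} [Field F] [Fintype F]
    (hF : Fintype.card F = p ^ (2 * s)) :
    ∃ a w : F, ∃ _ : (mordellCurve a).IsElliptic, IsPrimitiveRoot w 3 ∧
      Nat.card (mordellCurve a).Point = p ^ (2 * s) + 2 * p ^ s + 1 := by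
  classical
  have hdvd : 6 ∣ Fintype.card F - 1 := by
    rw [hF, pow_mul]
    exact (six_dvd_sq_sub_one (Nat.odd_iff.mp hodd) hp3).trans (Nat.sub_one_dvd_pow_sub_one _ s)
  obtain ⟨ζ, hζ⟩ := exists_isPrimitiveRoot_of_dvd_card_sub_one hdvd
  obtain ⟨a, ha, hcount⟩ := exists_card_filter_sq_eq_cube_add hp hp3 hF hζ
  have hell : (mordellCurve a).IsElliptic := isElliptic_mordellCurve_iff.mpr
    ⟨two_ne_zero_of_isPrimitiveRoot_six hζ, three_ne_zero_of_isPrimitiveRoot_six hζ, ha⟩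
  exact ⟨a, ζ ^ 2, hell, hζ.pow (by norm_num) rfl, by rw [card_point_mordellCurve, hcount]⟩

end Existence

/-- For an odd prime `p ≡ 2 (mod 3)`, `q = p^(2s)`, `h₀` a positive
divisor of `p^s + 1`, and `h = h₀²`, for all `1 ≤ t < m ≤ 2⌈(q + 2p^s + 1 - 8h)/(6h)⌉`,
there exist an optimal `(3h-2, 3)`-LRC with parameters `[3hm, (3h-2)t + 1, 3h(m-t)]_q`
and an optimal `(2, 3h-1)`-LRC with parameters `[3hm, 2t + 1, 3h(m-t)]_q`. -/
theorem stmt_5 (p : ℕ) (hp : p.Prime) (hodd : Odd p) (hp3 : p % 3 = 2)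
    (s : ℕ) (hs : 0 < s) (q : ℕ) (hq : q = p ^ (2 * s))
    (h₀ : ℕ) (hh₀ : 0 < h₀) (hdvd : h₀ ∣ p ^ s + 1) (h : ℕ) (hh : h = h₀ ^ 2)
    (t m : ℕ) (ht : 1 ≤ t) (htm : t < m)
    (hm : (m : ℤ) ≤ 2 * ⌈((q : ℚ) + 2 * (p : ℚ) ^ s + 1 - 8 * (h : ℚ)) / (6 * (h : ℚ))⌉)
    (F : Type*) [Field F] [Fintype F] [DecidableEq F] (hF : Fintype.card F = q) :
    ExistsOptimalLRC F (3 * h * m) ((3 * h - 2) * t + 1) (3 * h * (m - t)) (3 * h - 2) 3 ∧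
    ExistsOptimalLRC F (3 * h * m) (2 * t + 1) (3 * h * (m - t)) 2 (3 * h - 1) := by
  subst hq hh
  obtain ⟨a, w, _, hw, hcard⟩ := exists_isElliptic_mordellCurve_card_point hp hodd hp3 hF
  have hsq : h₀ ^ 2 ∣ Nat.card (mordellCurve a).Point := by
    rw [hcard, show p ^ (2 * s) + 2 * p ^ s + 1 = (p ^ s + 1) ^ 2 by ring]
    exact pow_dvd_pow_of_dvd hdvd 2
  obtain ⟨H, hH, hstable⟩ :=
    exists_stable_card_eq_sq hh₀.ne' (add_cubeRootMul_add_cubeRootMul hw) hsq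
  rw [← hH] at hm ⊢
  exact existsOptimalLRC_of_le_comap_cubeRootMul hw hstable htm (by rw [hcard]; exact_mod_cast hm)
end

section
/- Let s be a positive integer and q = 4^{2s+1} = 2^{4s+2}. Then for all integers t, m with 1 ≤ t < m ≤ (q + 2^{2s+2} − 8)/9, there exists an optimal (7, 3)-LRC over F_q with parameters [9m, 7t + 1, 9(m−t)]_q, and there exists an optimal (2, 8)-LRC over F_q with parameters [9m, 2t + 1, 9(m−t)]_q. -/
open Finset Polynomial

/-
Over `𝔽₄` the curve `y² + y = x³` is the Hermitian curve. The function `z = y + x⁻³` has degree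
`9` on it and is invariant under nine automorphisms, which are defined over `𝔽₄`, so the fibre of
`z` through a rational point with `x ∉ 𝔽₄` consists of nine rational points. The codewords are the
values at `m` such fibres of the functions `∑ j, f j (z) x ^ a j y ^ b j`, for polynomials `f j`
of degree less than `t`, where `x³` is one of the monomials and its coefficient is allowed degree
`t`.

Multiplied by `x ^ (3 (t - 1))`, such a function has poles only at infinity, of order at most
`9 t`, because `x³ z = x³ y + 1` has a pole of order `9`. So it has at most `9 t` zeros. On a fibre,
`z` is a constant and `x³ y = z x³ - 1`, which turns a codeword into a polynomial in `x` of degree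
less than `r`, up to a power of `x`; and `x` separates the points of a fibre.

The number of points with `x ∉ 𝔽₄` is `q - 8 + ∑ x, ψ (x³)`, with `ψ` the quadratic additive
character. As `ψ (x³)` is a quadratic function whose polar form has radical `𝔽₄`, the square of
the sum is `4 q`. The sign is the one for which `3` divides the number of points.
-/

section EqualFibres

variable {α β : Type*} [Fintype α] [DecidableEq β] {z : α → β} {N : ℕ}
  (hz : ∀ a, #{b | z b = z a} = N)
include hz

theorem card_filter_mem_eq_mul {S : Finset β} (hS : S ⊆ univ.image z) :
    #{i | z i ∈ S} = N * #S := by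
  rw [card_eq_sum_card_fiberwise (f := z) (t := S) (by simp [Set.MapsTo]), mul_comm]
  refine sum_const_nat fun a ha => ?_
  obtain ⟨i, -, rfl⟩ := mem_image.mp (hS ha)
  rw [filter_filter, ← hz i]
  congr 1
  exact filter_congr fun k _ => and_iff_right_of_imp (· ▸ ha)

theorem card_image_mul_card_fibre : N * #(univ.image z) = Fintype.card α := by
  rw [← card_filter_mem_eq_mul hz Subset.rfl]
  simp

theorem exists_embedding_card_fibre (hN : 0 < N) {m : ℕ} (hm : N * m ≤ Fintype.card α) :
    ∃ p : Fin (N * m) ↪ α, ∀ i, #{k | z (p k) = z (p i)} = N := by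
  rw [← card_image_mul_card_fibre hz, mul_le_mul_iff_right₀ hN] at hm
  obtain ⟨S, hS, rfl⟩ := exists_subset_card_eq hm
  let T : Finset α := {a | z a ∈ S}
  let e : Fin (N * #S) ≃ T := (T.equivFinOfCardEq (card_filter_mem_eq_mul hz hS)).symm
  refine ⟨e.toEmbedding.trans (.subtype _), fun i => ?_⟩
  have hi : z (e i) ∈ S := (mem_filter.mp (e i).2).2
  refine (card_nbij (t := {a | z a = z (e i)}) (fun k => (e k : α)) ?_ ?_ ?_).trans (hz (e i))
  · intro k hk
    exact mem_filter.mpr ⟨mem_univ _, (mem_filter.mp hk).2⟩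
  · exact fun k _ l _ hkl => e.injective (Subtype.ext hkl)
  · intro a ha
    have haz : z a = z (e i) := (mem_filter.mp ha).2
    have haT : a ∈ T := mem_filter.mpr ⟨mem_univ _, haz ▸ hi⟩
    exact ⟨e.symm ⟨a, haT⟩, by simpa using haz, by simp⟩

end EqualFibres

section FibreEvaluation

variable {F ι κ : Type*} [Field F] [Fintype κ]

/-- The evaluation map of a Tamo–Barg type code with locator `z` and multipliers `w`: it sends
polynomials `f j` of degree `< d j` to the vector of the values `∑ j, f j (z i) * w j i`. -/
noncomputable def fibreEval (z : ι → F) (w : κ → ι → F) (d : κ → ℕ) :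
    (∀ j, degreeLT F (d j)) →ₗ[F] (ι → F) :=
  LinearMap.pi fun i => ∑ j, w j i • (leval (z i) ∘ₗ (degreeLT F (d j)).subtype ∘ₗ .proj j)

theorem fibreEval_apply (z : ι → F) (w : κ → ι → F) (d : κ → ℕ) (f : ∀ j, degreeLT F (d j))
    (i : ι) : fibreEval z w d f i = ∑ j, (f j : F[X]).eval (z i) * w j i := by
  simp [fibreEval, leval_apply, mul_comm]

theorem fibreEval_single [DecidableEq κ] (z : ι → F) (w : κ → ι → F) (d : κ → ℕ) (j : κ)
    (p : degreeLT F (d j)) (i : ι) :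
    fibreEval z w d (Pi.single j p) i = (p : F[X]).eval (z i) * w j i := by
  rw [fibreEval_apply, Fintype.sum_eq_single j, Pi.single_eq_same]
  intro k hk
  simp [Pi.single_eq_of_ne hk]

theorem finrank_range_fibreEval {z : ι → F} {w : κ → ι → F} {d : κ → ℕ}
    (h : Function.Injective (fibreEval z w d)) :
    Module.finrank F (LinearMap.range (fibreEval z w d)) = ∑ j, d j := by
  have hfree (j : κ) : Module.finrank F (degreeLT F (d j)) = d j := by
    simpa using (degreeLTEquiv F (d j)).finrank_eq
  have (j : κ) : Module.Finite F (degreeLT F (d j)) := .equiv (degreeLTEquiv F (d j)).symm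
  simp [LinearMap.finrank_range_of_inj h, Module.finrank_pi_fintype, hfree]

variable [Fintype ι] [DecidableEq F]

/-- On every fibre of the locator `z`, each nonzero linear combination of the multipliers `w j` has
fewer than `s` zeros. This is what makes the fibres of `z` repair groups. -/
def FibreZerosLT (z : ι → F) (w : κ → ι → F) (s : ℕ) : Prop :=
  ∀ (i : ι) (v : κ → F), v ≠ 0 → #{k | z k = z i ∧ ∑ j, v j * w j k = 0} < s

theorem FibreZerosLT.card_zeros_fibreEval_lt {z : ι → F} {w : κ → ι → F} {s : ℕ}
    (h : FibreZerosLT z w s) {d : κ → ℕ} (f : ∀ j, degreeLT F (d j)) {i : ι}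
    (hi : ∃ j, (f j : F[X]).eval (z i) ≠ 0) :
    #{k | z k = z i ∧ fibreEval z w d f k = 0} < s := by
  refine (congrArg card (filter_congr fun k _ => and_congr_right fun hk => ?_)).trans_lt
    (h i (fun j => (f j : F[X]).eval (z i)) (Function.ne_iff.mpr hi))
  rw [fibreEval_apply, hk]

theorem FibreZerosLT.fibreEval_injective {z : ι → F} {w : κ → ι → F} {s : ℕ}
    (h : FibreZerosLT z w s) (hs : ∀ i, s ≤ #{k | z k = z i}) {d : κ → ℕ}
    (hd : ∀ j, d j ≤ #(univ.image z)) : Function.Injective (fibreEval z w d) := by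
  rw [injective_iff_map_eq_zero]
  intro f hf
  have hzero (i : ι) (j : κ) : (f j : F[X]).eval (z i) = 0 := by
    by_contra hij
    have := h.card_zeros_fibreEval_lt f ⟨j, hij⟩
    simp only [hf, Pi.zero_apply, and_true] at this
    exact (hs i).not_gt this
  ext1 j
  refine Subtype.ext <| eq_zero_of_degree_lt_of_eval_finset_eq_zero (univ.image z)
    ((mem_degreeLT.mp (f j).2).trans_le ?_) (by simp [hzero])
  exact_mod_cast hd j

end FibreEvaluation

section Codes

variable {F : Type*} [Field F] [DecidableEq F] {n r δ N m t : ℕ}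

theorem card_zeros_add_hammingWt (c : Fin n → F) : #{i | c i = 0} + hammingWt c = n := by
  simpa [hammingWt] using card_filter_add_card_filter_not (s := univ) fun i => c i = 0

variable {κ : Type*} [Fintype κ]

theorem FibreZerosLT.isLRC {z : Fin n → F} {w : κ → Fin n → F} (h : FibreZerosLT z w r)
    (hz : ∀ i, #{k | z k = z i} + 1 = r + δ) (d : κ → ℕ) :
    IsLRC (LinearMap.range (fibreEval z w d)) r δ := by
  intro i
  have hcard := hz i
  refine ⟨univ.filter fun k => z k = z i, by simp, by omega, ?_⟩
  rintro _ ⟨f, rfl⟩ ⟨k, hk, hne⟩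
  have hfi : ∃ j, (f j : F[X]).eval (z i) ≠ 0 := by
    by_contra! hall
    simp_all [fibreEval_apply]
  have hzeros := h.card_zeros_fibreEval_lt f hfi
  have hsplit := card_filter_add_card_filter_not (s := univ.filter fun k => z k = z i)
    fun k => fibreEval z w d f k = 0
  rw [filter_filter] at hsplit
  simp only [ne_eq]
  omega

-- The witness is the product of `z - a` over `t` values `a` of the locator.
theorem exists_mem_range_fibreEval_hammingWt {z : Fin (N * m) → F}
    {w : κ → Fin (N * m) → F} (hz : ∀ i, #{k | z k = z i} = N) (ht : t ≤ #(univ.image z))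
    {j₀ : κ} (hw : ∀ i, w j₀ i ≠ 0) {d : κ → ℕ} (hd : t < d j₀) :
    ∃ c ∈ LinearMap.range (fibreEval z w d), hammingWt c = N * (m - t) := by
  classical
  obtain ⟨S, hS, rfl⟩ := exists_subset_card_eq ht
  have hdeg : (∏ a ∈ S, (X - C a)).degree < (d j₀ : WithBot ℕ) := by
    simp only [degree_prod, degree_X_sub_C, sum_const, nsmul_one]
    exact_mod_cast hd
  refine ⟨_, ⟨Pi.single j₀ ⟨_, mem_degreeLT.mpr hdeg⟩, rfl⟩, ?_⟩
  set c := fibreEval z w d (Pi.single j₀ ⟨_, mem_degreeLT.mpr hdeg⟩) with hc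
  have hzeros : #{i | c i = 0} = N * #S := by
    rw [← card_filter_mem_eq_mul hz hS]
    simp [hc, fibreEval_single, hw, eval_prod, prod_eq_zero_iff, sub_eq_zero]
  have := card_zeros_add_hammingWt c
  rw [Nat.mul_sub]
  omega

theorem singletonOptimal_of_add_eq (hr : 0 < r) (hδ : r + δ = N + 1) (htm : t ≤ m) :
    SingletonOptimal (N * m) (r * t + 1) (N * (m - t)) r δ := by
  have hceil : (r * t + 1 + r - 1) / r = t + 1 := by
    rw [show r * t + 1 + r - 1 = r * (t + 1) by grind, Nat.mul_div_cancel_left _ hr]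
  rw [SingletonOptimal, hceil]
  zify [htm] at hδ ⊢
  linear_combination (t : ℤ) * hδ

theorem existsOptimalLRC_of_fibreEval (hr : r ≤ N) (hδ : r + δ = N + 1) (htm : t < m)
    {z : Fin (N * m) → F} {w : Fin r → Fin (N * m) → F} (hz : ∀ i, #{k | z k = z i} = N)
    (hloc : FibreZerosLT z w r) {j₀ : Fin r} (hw : ∀ i, w j₀ i ≠ 0)
    (hglob : ∀ f, fibreEval z w (Function.update (fun _ => t) j₀ (t + 1)) f ≠ 0 →
      #{i | fibreEval z w (Function.update (fun _ => t) j₀ (t + 1)) f i = 0} ≤ N * t) :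
    ExistsOptimalLRC F (N * m) (r * t + 1) (N * (m - t)) r δ := by
  have hN : 0 < N := j₀.pos.trans_le hr
  have himage : #(univ.image z) = m :=
    Nat.eq_of_mul_eq_mul_left hN ((card_image_mul_card_fibre hz).trans (Fintype.card_fin _))
  set d : Fin r → ℕ := Function.update (fun _ => t) j₀ (t + 1) with hd
  have hdsum : ∑ j, d j = r * t + 1 := by
    rw [hd, sum_update_of_mem (mem_univ _), sum_const, smul_eq_mul,
      card_sdiff_of_subset (subset_univ _), card_univ, Fintype.card_fin, card_singleton]
    have := j₀.pos
    rw [Nat.sub_mul]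
    have := Nat.le_mul_of_pos_left t this
    omega
  have hinj : Function.Injective (fibreEval z w d) :=
    hloc.fibreEval_injective (fun i => hr.trans_eq (hz i).symm) fun j => by
      rw [himage, hd, Function.update_apply]; split_ifs <;> omega
  have hweight : N * (m - t) = N * m - N * t := Nat.mul_sub ..
  obtain ⟨c, hc, hcwt⟩ := exists_mem_range_fibreEval_hammingWt (d := d) hz
    (htm.le.trans_eq himage.symm) hw (by simp [hd])
  refine ⟨LinearMap.range (fibreEval z w d), ?_, ⟨?_, c, hc, ?_, hcwt⟩, ?_, ?_⟩
  · rw [finrank_range_fibreEval hinj, hdsum]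
  · rintro _ ⟨f, rfl⟩ hne
    have := card_zeros_add_hammingWt (fibreEval z w d f)
    have := hglob f hne
    omega
  · rintro rfl
    have : 0 < N * (m - t) := Nat.mul_pos hN (Nat.sub_pos_of_lt htm)
    have hwt0 : hammingWt (0 : Fin (N * m) → F) = 0 := by simp [hammingWt]
    omega
  · exact hloc.isLRC (fun i => by rw [hz, hδ]) d
  · exact singletonOptimal_of_add_eq j₀.pos hδ htm.le

end Codes

section PoleOrder

open WeierstrassCurve.Affine.CoordinateRing
open scoped Polynomial.Bivariate

variable {F : Type*} [Field F]

theorem degree_norm_add_le {W : WeierstrassCurve.Affine F} (f g : W.CoordinateRing) :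
    (Algebra.norm F[X] (f + g)).degree ≤
      max (Algebra.norm F[X] f).degree (Algebra.norm F[X] g).degree := by
  obtain ⟨p, q, rfl⟩ := exists_smul_basis_eq f
  obtain ⟨p', q', rfl⟩ := exists_smul_basis_eq g
  rw [add_add_add_comm, ← add_smul, ← add_smul]
  simp only [degree_norm_smul_basis]
  have hdouble {a b c : WithBot ℕ} (h : a ≤ max b c) : 2 • a ≤ max (2 • b) (2 • c) := by
    rcases le_max_iff.mp h with h | h
    · exact le_max_of_le_left (nsmul_le_nsmul_right h 2)
    · exact le_max_of_le_right (nsmul_le_nsmul_right h 2)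
  refine max_le ((hdouble (degree_add_le p p')).trans ?_) ?_
  · gcongr <;> exact le_max_left ..
  · refine (add_le_add_left (hdouble (degree_add_le q q')) 3).trans ?_
    rw [← max_add_add_right]
    gcongr <;> exact le_max_right ..

theorem natDegree_norm_smul_le {W : WeierstrassCurve.Affine F} (c : F) (f : W.CoordinateRing) :
    (Algebra.norm F[X] (c • f)).natDegree ≤ (Algebra.norm F[X] f).natDegree := by
  rw [← algebraMap_smul F[X] c f, Algebra.smul_def, map_mul,
    Algebra.norm_algebraMap_of_basis (WeierstrassCurve.Affine.CoordinateRing.basis W)]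
  exact natDegree_mul_le.trans (by simp [algebraMap_eq])

/-- The Riemann–Roch space `L(n ∞)`: the functions on the affine Weierstrass curve `W` with a pole
of order at most `n` at infinity. As infinity is the only point above the pole of `x`, the pole
order of a function is the degree of its norm to `F[x]`. -/
noncomputable def polesLE (W : WeierstrassCurve.Affine F) (n : ℕ) :
    Submodule F W.CoordinateRing where
  carrier := {f | (Algebra.norm F[X] f).natDegree ≤ n}
  zero_mem' := by
    have : Algebra.norm F[X] (0 : W.CoordinateRing) = 0 := by
      simpa using norm_smul_basis (W' := W) 0 0
    simp [this]
  add_mem' {f g} hf hg := natDegree_le_of_degree_le <| (degree_norm_add_le f g).trans <|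
    max_le (natDegree_le_iff_degree_le.mp hf) (natDegree_le_iff_degree_le.mp hg)
  smul_mem' c f hf := (natDegree_norm_smul_le c f).trans hf

/-- The coordinate function `x` on the affine curve `W`. -/
noncomputable def xCoord (W : WeierstrassCurve.Affine F) : W.CoordinateRing := mk W (C X)

/-- The coordinate function `y` on the affine curve `W`. -/
noncomputable def yCoord (W : WeierstrassCurve.Affine F) : W.CoordinateRing := mk W Y

variable {W : WeierstrassCurve.Affine F} {n n' : ℕ} {f g : W.CoordinateRing}

theorem mem_polesLE : f ∈ polesLE W n ↔ (Algebra.norm F[X] f).natDegree ≤ n := Iff.rfl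

theorem one_mem_polesLE : 1 ∈ polesLE W n := by
  simp [mem_polesLE]

theorem xCoord_mem_polesLE : xCoord W ∈ polesLE W 2 := by
  have := degree_norm_smul_basis (W' := W) X 0
  exact natDegree_le_of_degree_le (by simp_all [smul, xCoord])

theorem yCoord_mem_polesLE : yCoord W ∈ polesLE W 3 := by
  have := degree_norm_smul_basis (W' := W) 0 1
  exact natDegree_le_of_degree_le (by simp_all [yCoord])

theorem polesLE_mono (h : n ≤ n') : polesLE W n ≤ polesLE W n' := fun _ hf => le_trans hf h

theorem mul_mem_polesLE (hf : f ∈ polesLE W n) (hg : g ∈ polesLE W n') :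
    f * g ∈ polesLE W (n + n') := by
  rw [mem_polesLE, map_mul]
  exact natDegree_mul_le_of_le hf hg

theorem pow_mem_polesLE (hf : f ∈ polesLE W n) (k : ℕ) : f ^ k ∈ polesLE W (k * n) := by
  rw [mem_polesLE, map_pow]
  exact natDegree_pow_le_of_le k hf

-- Distinct points at which `f` vanishes are distinct algebra maps out of `F[W] / (f)`, whose
-- dimension is the degree of the norm of `f`.
theorem card_zeros_le_of_mem_polesLE {ι : Type*} [Fintype ι] [DecidableEq F]
    {e : ι → W.CoordinateRing →ₐ[F] F} (he : Function.Injective e) (hf : f ≠ 0)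
    (hfn : f ∈ polesLE W n) : #{i | e i f = 0} ≤ n := by
  have hspan := Ideal.span_singleton_eq_bot.not.mpr hf
  have : Module.Finite F (W.CoordinateRing ⧸ Ideal.span {f}) :=
    .equiv (Ideal.quotientEquivDirectSum F
      (WeierstrassCurve.Affine.CoordinateRing.basis W) hspan).symm
  let φ (i : {i // e i f = 0}) : W.CoordinateRing ⧸ Ideal.span {f} →ₐ[F] F :=
    Ideal.Quotient.liftₐ (Ideal.span {f}) (e i) fun a ha => by
      obtain ⟨b, rfl⟩ := Ideal.mem_span_singleton.mp ha
      rw [map_mul, i.2, zero_mul]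
  have hφ : Function.Injective φ := fun i j hij => Subtype.ext <| he <| AlgHom.ext fun a =>
    DFunLike.congr_fun hij (Ideal.Quotient.mk _ a)
  calc #{i | e i f = 0} = Nat.card {i // e i f = 0} := by
        rw [Nat.card_eq_fintype_card, Fintype.card_subtype]
    _ ≤ Nat.card (W.CoordinateRing ⧸ Ideal.span {f} →ₐ[F] F) := Nat.card_le_card_of_injective φ hφ
    _ ≤ Module.finrank F (W.CoordinateRing ⧸ Ideal.span {f}) := card_algHom_le_finrank ..
    _ = (Algebra.norm F[X] f).natDegree :=
        finrank_quotient_span_eq_natDegree_norm (WeierstrassCurve.Affine.CoordinateRing.basis W) hf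
    _ ≤ n := hfn

end PoleOrder

section CurveCodes

variable {F : Type*} [Field F] {W : WeierstrassCurve.Affine F} {N n t m r δ : ℕ}
  {U V : W.CoordinateRing}

theorem exists_mem_polesLE_eval_div (hU : U ∈ polesLE W n) (hV : V ∈ polesLE W n) {p : F[X]}
    {k : ℕ} (hp : p.degree < (k + 1 : ℕ)) :
    ∃ f ∈ polesLE W (k * n), ∀ φ : W.CoordinateRing →ₐ[F] F, φ V ≠ 0 →
      φ f = p.eval (φ U / φ V) * φ V ^ k := by
  refine ⟨∑ i ∈ range (k + 1), p.coeff i • (U ^ i * V ^ (k - i)), ?_, fun φ hφ => ?_⟩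
  · refine sum_mem fun i hi => Submodule.smul_mem _ _ ?_
    convert mul_mem_polesLE (pow_mem_polesLE hU i) (pow_mem_polesLE hV (k - i)) using 1
    rw [← add_mul, Nat.add_sub_cancel' (mem_range_succ_iff.mp hi)]
  · have hpk : p.natDegree < k + 1 := Nat.lt_succ_of_le <|
      natDegree_le_iff_coeff_eq_zero.mpr fun i hi => (degree_lt_iff_coeff_zero p _).mp hp i hi
    rw [eval_eq_sum_range' hpk, sum_mul, map_sum]
    refine sum_congr rfl fun i hi => ?_
    obtain ⟨l, rfl⟩ := Nat.exists_eq_add_of_le (mem_range_succ_iff.mp hi)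
    simp only [map_smul, map_mul, map_pow, Nat.add_sub_cancel_left, smul_eq_mul, div_pow, pow_add]
    field_simp

variable {ω : Fin r → W.CoordinateRing} {j₀ : Fin r}

-- Multiplying a codeword by `ω j₀ ^ (t - 1)` clears its denominators.
theorem exists_mem_polesLE_fibreEval (ht : 0 < t) (hU : U ∈ polesLE W N)
    (hω : ∀ j, ω j ∈ polesLE W N) {ι : Type*} {e : ι → W.CoordinateRing →ₐ[F] F}
    (hV : ∀ i, e i (ω j₀) ≠ 0)
    (f : ∀ j, degreeLT F (Function.update (fun _ => t) j₀ (t + 1) j)) :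
    ∃ g ∈ polesLE W (N * t), ∀ i, e i g =
      fibreEval (fun i => e i U / e i (ω j₀)) (fun j i => e i (ω j)) _ f i *
        e i (ω j₀) ^ (t - 1) := by
  obtain ⟨t, rfl⟩ := Nat.exists_eq_succ_of_ne_zero ht.ne'
  have hterm (j : Fin r) : ∃ g ∈ polesLE W (N * (t + 1)), ∀ i, e i g =
      (f j : F[X]).eval (e i U / e i (ω j₀)) * e i (ω j) * e i (ω j₀) ^ t := by
    have hfj := mem_degreeLT.mp (f j).2
    rcases eq_or_ne j j₀ with rfl | hj
    · simp only [Function.update_self] at hfj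
      obtain ⟨g, hg, hgφ⟩ := exists_mem_polesLE_eval_div hU (hω j) hfj
      exact ⟨g, mul_comm N _ ▸ hg, fun i => by rw [hgφ _ (hV i)]; ring⟩
    · simp only [Function.update_of_ne hj] at hfj
      obtain ⟨g, hg, hgφ⟩ := exists_mem_polesLE_eval_div hU (hω j₀) hfj
      have hdeg : t * N + N = N * (t + 1) := by ring
      refine ⟨g * ω j, hdeg ▸ mul_mem_polesLE hg (hω j), fun i => ?_⟩
      rw [map_mul, hgφ _ (hV i)]
      ring
  choose g hg hgφ using hterm
  refine ⟨∑ j, g j, sum_mem fun j _ => hg j, fun i => ?_⟩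
  rw [fibreEval_apply, sum_mul, map_sum]
  exact sum_congr rfl fun j _ => hgφ j i

theorem existsOptimalLRC_of_polesLE [DecidableEq F] (hr : r ≤ N) (hδ : r + δ = N + 1) (ht : 0 < t)
    (htm : t < m) (hU : U ∈ polesLE W N) (hω : ∀ j, ω j ∈ polesLE W N)
    {e : Fin (N * m) → W.CoordinateRing →ₐ[F] F} (he : Function.Injective e)
    (hV : ∀ i, e i (ω j₀) ≠ 0)
    (hz : ∀ i, #{k | e k U / e k (ω j₀) = e i U / e i (ω j₀)} = N)
    (hloc : FibreZerosLT (fun i => e i U / e i (ω j₀)) (fun j i => e i (ω j)) r) :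
    ExistsOptimalLRC F (N * m) (r * t + 1) (N * (m - t)) r δ := by
  refine existsOptimalLRC_of_fibreEval hr hδ htm hz hloc hV fun f hf => ?_
  obtain ⟨g, hg, hge⟩ := exists_mem_polesLE_fibreEval ht hU hω hV f
  have hzero (i) : e i g = 0 ↔
      fibreEval (fun k => e k U / e k (ω j₀)) (fun j k => e k (ω j)) _ f i = 0 := by
    rw [hge, mul_eq_zero, or_iff_left (pow_ne_zero _ (hV i))]
  have hg0 : g ≠ 0 := by
    rintro rfl
    exact hf (funext fun i => (hzero i).mp (map_zero _))
  calc _ = #{i | e i g = 0} := by simp only [hzero]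
    _ ≤ N * t := card_zeros_le_of_mem_polesLE he hg0 hg

end CurveCodes

section HermitianCubic

open WeierstrassCurve.Affine.CoordinateRing
open scoped Polynomial.Bivariate

variable {F : Type*} [Field F]

/-- Evaluation of functions on a Weierstrass curve at the point `(x, y)`. -/
noncomputable def pointEval {W : WeierstrassCurve.Affine F} {x y : F} (h : W.Equation x y) :
    W.CoordinateRing →ₐ[F] F :=
  AdjoinRoot.liftAlgHom W.polynomial (aeval x) y <| by
    simpa [coe_aeval_eq_evalRingHom, eval₂_evalRingHom, WeierstrassCurve.Affine.Equation] using h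

@[simp]
theorem pointEval_xCoord {W : WeierstrassCurve.Affine F} {x y : F} (h : W.Equation x y) :
    pointEval h (xCoord W) = x := by
  simp [pointEval, xCoord]

@[simp]
theorem pointEval_yCoord {W : WeierstrassCurve.Affine F} {x y : F} (h : W.Equation x y) :
    pointEval h (yCoord W) = y := by
  simp [pointEval, yCoord]

/-- The curve `y² + y = x³`, which over `𝔽₄` is the Hermitian curve. -/
def hermitianCubic (F : Type*) [Field F] : WeierstrassCurve.Affine F := ⟨0, 0, 1, 0, 0⟩

theorem hermitianCubic_equation_iff {x y : F} :
    (hermitianCubic F).Equation x y ↔ y ^ 2 + y = x ^ 3 := by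
  simp [WeierstrassCurve.Affine.equation_iff, hermitianCubic]

/-- The function `y + x⁻³` on the curve `y² + y = x³`, of degree `9`. Its fibres are the repair
groups. -/
def locator (p : F × F) : F := p.2 + (p.1 ^ 3)⁻¹

-- A nonzero polynomial of degree `< s` cannot vanish at `s` distinct points of a fibre.
theorem FibreZerosLT.of_vandermonde {ι κ : Type*} [Fintype ι] [Fintype κ] [DecidableEq F] {s : ℕ}
    {z : ι → F} {w : κ → ι → F} (x : ι → F) (hx : ∀ i k, z i = z k → x i = x k → i = k)
    (h : ∀ (i : ι) (v : κ → F), v ≠ 0 → ∃ c : Fin s → F, c ≠ 0 ∧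
      ∀ k, z k = z i → ∑ j, v j * w j k = 0 → ∑ j : Fin s, x k ^ (j : ℕ) * c j = 0) :
    FibreZerosLT z w s := by
  intro i v hv
  obtain ⟨c, hc, hroot⟩ := h i v hv
  by_contra! hle
  obtain ⟨φ⟩ : Nonempty (Fin s ↪ ({k | z k = z i ∧ ∑ j, v j * w j k = 0} : Finset ι)) :=
    Function.Embedding.nonempty_of_card_le <| by
      simpa only [Fintype.card_fin, Fintype.card_coe] using hle
  have hφ (a : Fin s) : z (φ a) = z i ∧ ∑ j, v j * w j (φ a) = 0 :=
    (mem_filter.mp (φ a).2).2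
  refine hc (Matrix.eq_zero_of_forall_index_sum_pow_mul_eq_zero (f := fun a => x (φ a)) ?_
    fun a => hroot _ (hφ a).1 (hφ a).2)
  intro a b hab
  exact φ.injective (Subtype.ext (hx _ _ ((hφ a).1.trans (hφ b).1.symm) hab))

section Fibres

variable {ι : Type*} {p : ι → F × F}

theorem fst_injOn_locator_fibre (hp : Function.Injective p) {i k : ι}
    (hz : locator (p i) = locator (p k)) (hx : (p i).1 = (p k).1) : i = k :=
  hp <| Prod.ext hx <| by simpa [locator, hx] using hz

variable [DecidableEq F] [Fintype ι]

theorem fibreZerosLT_two (hp : Function.Injective p) (hx : ∀ i, (p i).1 ≠ 0) :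
    FibreZerosLT (fun i => locator (p i))
      (fun j i => (p i).1 ^ ![3, 4] j * (p i).2 ^ ![0, 0] j) 2 := by
  refine .of_vandermonde (fun i => (p i).1) (fun _ _ => fst_injOn_locator_fibre hp) fun i v hv =>
    ⟨v, hv, fun k _ hk => ?_⟩
  refine (mul_eq_zero.mp ?_).resolve_left (pow_ne_zero 3 (hx k))
  simp only [Fin.sum_univ_two, Fin.val_zero, Fin.val_one, pow_zero, pow_one]
  simp only [Fin.sum_univ_two, Matrix.cons_val_zero, Matrix.cons_val_one, pow_zero] at hk
  linear_combination hk

-- On the fibre above `b` one has `x³ y = b x³ - 1`, so `x³` times a combination of the multipliers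
-- is a polynomial in `x`.
theorem fibreZerosLT_seven (hp : Function.Injective p) (hx : ∀ i, (p i).1 ≠ 0) :
    FibreZerosLT (fun i => locator (p i))
      (fun j i => (p i).1 ^ ![3, 2, 1, 0, 0, 1, 2] j * (p i).2 ^ ![0, 0, 0, 0, 1, 1, 1] j) 7 := by
  refine .of_vandermonde (fun i => (p i).1) (fun _ _ => fst_injOn_locator_fibre hp) fun i v hv => ?_
  set b := locator (p i)
  refine ⟨![-v 4, -v 5, -v 6, v 3 + b * v 4, v 2 + b * v 5, v 1 + b * v 6, v 0], ?_, ?_⟩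
  · contrapose! hv
    simp only [Matrix.cons_eq_zero_iff, neg_eq_zero] at hv
    obtain ⟨h4, h5, h6, h3, h2, h1, h0, -⟩ := hv
    ext j
    fin_cases j <;> simp_all
  · intro k hk hsum
    have hy : (p k).1 ^ 3 * (p k).2 = b * (p k).1 ^ 3 - 1 := by
      rw [← hk, locator, add_mul, inv_mul_cancel₀ (pow_ne_zero 3 (hx k))]
      ring
    simp only [Fin.sum_univ_seven, Matrix.cons_val, Fin.coe_ofNat_eq_mod] at hsum ⊢
    linear_combination (p k).1 ^ 3 * hsum - (v 4 + v 5 * (p k).1 + v 6 * (p k).1 ^ 2) * hy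

end Fibres

theorem monomial_mem_polesLE {W : WeierstrassCurve.Affine F} {a b n : ℕ} (h : a * 2 + b * 3 ≤ n) :
    xCoord W ^ a * yCoord W ^ b ∈ polesLE W n :=
  polesLE_mono h <| mul_mem_polesLE (pow_mem_polesLE xCoord_mem_polesLE a)
    (pow_mem_polesLE yCoord_mem_polesLE b)

theorem existsOptimalLRC_of_locator [DecidableEq F] {m t r δ : ℕ} (hr : r ≤ 9)
    (hδ : r + δ = 9 + 1) (ht : 0 < t) (htm : t < m) {p : Fin (9 * m) → F × F}
    (hp : Function.Injective p) (hx : ∀ i, (p i).1 ≠ 0)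
    (hcurve : ∀ i, (p i).2 ^ 2 + (p i).2 = (p i).1 ^ 3)
    (hcard : ∀ i, #{k | locator (p k) = locator (p i)} = 9) {a b : Fin r → ℕ}
    (hab : ∀ j, a j * 2 + b j * 3 ≤ 9) (j₀ : Fin r) (haj₀ : a j₀ = 3) (hbj₀ : b j₀ = 0)
    (hloc : FibreZerosLT (fun i => locator (p i)) (fun j i => (p i).1 ^ a j * (p i).2 ^ b j) r) :
    ExistsOptimalLRC F (9 * m) (r * t + 1) (9 * (m - t)) r δ := by
  let e (i) := pointEval (hermitianCubic_equation_iff.mpr (hcurve i))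
  let ω (j) := xCoord (hermitianCubic F) ^ a j * yCoord (hermitianCubic F) ^ b j
  let U := xCoord (hermitianCubic F) ^ 3 * yCoord (hermitianCubic F) + 1
  have hU : U ∈ polesLE _ 9 :=
    add_mem (by simpa using monomial_mem_polesLE (b := 1) (by norm_num)) one_mem_polesLE
  have he : Function.Injective e := fun i k hik => hp <| Prod.ext
    (by simpa [e] using DFunLike.congr_fun hik (xCoord _))
    (by simpa [e] using DFunLike.congr_fun hik (yCoord _))
  have heω (i j) : e i (ω j) = (p i).1 ^ a j * (p i).2 ^ b j := by simp [e, ω]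
  have hV (i) : e i (ω j₀) = (p i).1 ^ 3 := by simp [heω, haj₀, hbj₀]
  have hlocator (i) : e i U / e i (ω j₀) = locator (p i) := by
    have := hx i
    rw [hV, locator]
    simp only [e, U, map_add, map_mul, map_pow, map_one, pointEval_xCoord, pointEval_yCoord]
    field
  refine existsOptimalLRC_of_polesLE (ω := ω) (j₀ := j₀) (e := e) hr hδ ht htm hU
    (fun j => monomial_mem_polesLE (hab j)) he (by simp [hV, hx]) ?_ ?_
  · simpa only [hlocator] using hcard
  · simp only [hlocator]
    simpa only [heω] using hloc

end HermitianCubic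

section CharacterSums

/-- The character of an additive group whose kernel is a given subgroup of index two. -/
noncomputable def indexTwoChar {G : Type*} [AddGroup G] (H : AddSubgroup G) (hH : H.index = 2) :
    AddChar G ℤ :=
  open scoped Classical in
  { toFun a := if a ∈ H then 1 else -1
    map_zero_eq_one' := if_pos H.zero_mem
    map_add_eq_mul' a b := by
      have := AddSubgroup.add_mem_iff_of_index_two hH (a := a) (b := b)
      by_cases ha : a ∈ H <;> by_cases hb : b ∈ H <;> simp_all }

theorem indexTwoChar_apply_eq_one_iff {G : Type*} [AddGroup G] {H : AddSubgroup G}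
    (hH : H.index = 2) {a : G} : indexTwoChar H hH a = 1 ↔ a ∈ H := by
  by_cases ha : a ∈ H <;> simp [indexTwoChar, ha]

theorem indexTwoChar_apply_of_notMem {G : Type*} [AddGroup G] {H : AddSubgroup G}
    (hH : H.index = 2) {a : G} (ha : a ∉ H) : indexTwoChar H hH a = -1 := if_neg ha

theorem indexTwoChar_ne_one {G : Type*} [AddGroup G] {H : AddSubgroup G} (hH : H.index = 2) :
    indexTwoChar H hH ≠ 1 := by
  intro h
  have htop : H = ⊤ := (AddSubgroup.eq_top_iff' H).mpr fun a =>
    (indexTwoChar_apply_eq_one_iff hH).mp (by simp [h])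
  simp [htop] at hH

theorem card_fibre_eq_one_add_indexTwoChar {G M : Type*} [AddGroup G] [Fintype G] [AddGroup M]
    [DecidableEq M] (f : G →+ M) (hker : Nat.card f.ker = 2) (hrange : f.range.index = 2) (c : M) :
    (#{g | f g = c} : ℤ) = 1 + indexTwoChar f.range hrange c := by
  by_cases hc : c ∈ f.range
  · rw [(indexTwoChar_apply_eq_one_iff hrange).mpr hc,
      AddMonoidHom.card_fiber_eq_of_mem_range f hc ⟨0, map_zero f⟩, ← Fintype.card_subtype,
      ← Nat.card_eq_fintype_card]
    exact_mod_cast hker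
  · rw [indexTwoChar_apply_of_notMem hrange hc, filter_false_of_mem fun g _ hg => hc ⟨g, hg⟩]
    simp

theorem sq_sum_eq_card_mul_sum {G R : Type*} [AddCommGroup G] [Fintype G] [CommRing R] [IsDomain R]
    [DecidableEq (AddChar G R)] {f : G → R} (B : G → AddChar G R)
    (hf : ∀ x h, f x * f (x + h) = f h * B h x) :
    (∑ x, f x) ^ 2 = Fintype.card G * ∑ h with B h = 0, f h := by
  calc (∑ x, f x) ^ 2 = ∑ x, ∑ h, f x * f (x + h) := by
        rw [sq, sum_mul_sum]
        exact sum_congr rfl fun x _ => (Equiv.sum_comp (Equiv.addLeft x) fun y => f x * f y).symm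
    _ = ∑ h, f h * ∑ x, B h x := by
        simp only [hf, mul_sum]
        exact sum_comm
    _ = Fintype.card G * ∑ h with B h = 0, f h := by
        simp only [AddChar.sum_eq_ite, mul_ite, mul_zero, ← sum_filter, mul_sum, mul_comm]

end CharacterSums

section CubicCharacterSum

variable (F : Type*) [Field F] [CharP F 2]

/-- The Artin–Schreier map `y ↦ y² + y`. -/
def artinSchreier : F →+ F := (frobenius F 2 : F →+ F) + .id F

variable {F}

theorem artinSchreier_apply (y : F) : artinSchreier F y = y ^ 2 + y := rfl

theorem card_ker_artinSchreier : Nat.card (artinSchreier F).ker = 2 := by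
  have hker : ((artinSchreier F).ker : Set F) = {0, 1} := by
    ext y
    have : y ^ 2 + y = y * (y - 1) := by grind
    simp [artinSchreier_apply, this, sub_eq_zero]
  rw [← SetLike.coe_sort_coe, hker]
  simp

variable [Finite F]

theorem index_range_artinSchreier : (artinSchreier F).range.index = 2 := by
  have hcard := (artinSchreier F).ker.card_mul_index.trans
    (artinSchreier F).range.index_mul_card.symm
  rw [AddSubgroup.index_ker, card_ker_artinSchreier] at hcard
  exact (Nat.eq_of_mul_eq_mul_right Nat.card_pos hcard).symm

variable (F) in
/-- The quadratic additive character, trivial exactly on the values of `y² + y`. -/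
noncomputable def quadraticAddChar : AddChar F ℤ :=
  indexTwoChar (artinSchreier F).range index_range_artinSchreier

theorem quadraticAddChar_sq_add_self (y : F) : quadraticAddChar F (y ^ 2 + y) = 1 :=
  (indexTwoChar_apply_eq_one_iff _).mpr ⟨y, rfl⟩

theorem quadraticAddChar_add_sq_add_self (a y : F) :
    quadraticAddChar F (a + (y ^ 2 + y)) = quadraticAddChar F a := by
  rw [AddChar.map_add_eq_mul, quadraticAddChar_sq_add_self, mul_one]

theorem quadraticAddChar_ne_one : quadraticAddChar F ≠ 1 := indexTwoChar_ne_one _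

variable (F) in
/-- The polar form `(h, x) ↦ ψ (x² h + x h²)` of `x ↦ ψ (x³)`, for `ψ` the quadratic character. As
`ψ (x h²) = ψ (x² h⁴)`, it is written as a character in `x²`. -/
noncomputable def cubicPolar (h : F) : AddChar F ℤ :=
  ((quadraticAddChar F).mulShift (h + h ^ 4)).compAddMonoidHom (frobenius F 2 : F →+ F)

theorem cubicPolar_apply (h x : F) :
    cubicPolar F h x = quadraticAddChar F ((h + h ^ 4) * x ^ 2) := rfl

theorem quadraticAddChar_cube_mul (x h : F) :
    quadraticAddChar F (x ^ 3) * quadraticAddChar F ((x + h) ^ 3) =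
      quadraticAddChar F (h ^ 3) * cubicPolar F h x := by
  rw [cubicPolar_apply, ← AddChar.map_add_eq_mul, ← AddChar.map_add_eq_mul,
    ← quadraticAddChar_add_sq_add_self _ (x * h ^ 2)]
  congr 1
  grind

theorem cubicPolar_eq_zero_iff {h : F} : cubicPolar F h = 0 ↔ h ^ 4 = h := by
  rw [← CharTwo.add_eq_zero (a := h ^ 4), add_comm (h ^ 4)]
  refine ⟨fun hB => ?_, fun hh => by ext x; simp [cubicPolar_apply, hh]⟩
  by_contra hh
  exact AddChar.IsPrimitive.of_ne_one quadraticAddChar_ne_one hh <|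
    AddChar.compAddMonoidHom_injective_left _ (surjective_frobenius F 2) hB

section PrimitiveCubeRoot

variable {ζ : F} (hζ : IsPrimitiveRoot ζ 3)
include hζ

omit [CharP F 2] [Finite F] in
theorem sq_add_self_add_one_of_isPrimitiveRoot : ζ ^ 2 + ζ + 1 = 0 := by
  simpa [sum_range_succ, add_comm, add_assoc, add_left_comm] using
    hζ.geom_sum_eq_zero (by norm_num)

theorem quadraticAddChar_cube_of_pow_four_eq {x : F} (hx : x ^ 4 = x) :
    quadraticAddChar F (x ^ 3) = 1 := by
  rcases eq_or_ne x 0 with rfl | hx0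
  · simp
  · have hx3 : x ^ 3 = ζ ^ 2 + ζ := by
      have := sq_add_self_add_one_of_isPrimitiveRoot hζ
      have : x * (x ^ 3 - 1) = 0 := by grind
      grind
    rw [hx3, quadraticAddChar_sq_add_self]

end PrimitiveCubeRoot

end CubicCharacterSum

/-- The points of the curve `y² + y = x³` with `x ∉ 𝔽₄`. They are the points on which the fibres of
the locator are complete. -/
abbrev SplitPoint (F : Type*) [Field F] := {p : F × F // p.2 ^ 2 + p.2 = p.1 ^ 3 ∧ p.1 ^ 4 ≠ p.1}

section Counting

variable {F : Type*} [Field F] [Fintype F] [DecidableEq F]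

theorem card_filter_pow_eq_pow {n : ℕ} (hn : 0 < n) {ζ : F} (hζ : IsPrimitiveRoot ζ n) {a : F}
    (ha : a ≠ 0) : #{x | x ^ n = a ^ n} = n := by
  have hroots : univ.filter (fun x => x ^ n = a ^ n) = (nthRoots n (a ^ n)).toFinset := by
    ext x
    simp [mem_nthRoots hn]
  rw [hroots, Multiset.toFinset_card_of_nodup (hζ.nthRoots_nodup (pow_ne_zero n ha)),
    hζ.card_nthRoots, if_pos ⟨a, rfl⟩]

theorem card_filter_pow_succ_eq_self {n : ℕ} (hn : 0 < n) {ζ : F} (hζ : IsPrimitiveRoot ζ n) :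
    #{x : F | x ^ (n + 1) = x} = n + 1 := by
  have hunion : univ.filter (fun x : F => x ^ (n + 1) = x) = cons 0 {x | x ^ n = 1 ^ n}
      (by simp [hn.ne']) := by
    ext x
    rcases eq_or_ne x 0 with rfl | hx <;> simp [pow_succ, *]
  rw [hunion, card_cons, card_filter_pow_eq_pow hn hζ one_ne_zero]

variable [CharP F 2] {ζ : F} (hζ : IsPrimitiveRoot ζ 3)

theorem card_artinSchreier_fibre (c : F) :
    (#{y | y ^ 2 + y = c} : ℤ) = 1 + quadraticAddChar F c := by
  convert card_fibre_eq_one_add_indexTwoChar (artinSchreier F) card_ker_artinSchreier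
    index_range_artinSchreier c <;> rfl

include hζ

omit [DecidableEq F] in
theorem sq_sum_quadraticAddChar_cube :
    (∑ x : F, quadraticAddChar F (x ^ 3)) ^ 2 = 4 * Fintype.card F := by
  classical
  rw [sq_sum_eq_card_mul_sum (cubicPolar F) quadraticAddChar_cube_mul, mul_comm]
  congr 1
  simp only [cubicPolar_eq_zero_iff]
  rw [sum_congr rfl fun x hx => quadraticAddChar_cube_of_pow_four_eq hζ (mem_filter.mp hx).2,
    sum_const, card_filter_pow_succ_eq_self (by norm_num) hζ]
  rfl

theorem card_splitPoint : (Fintype.card (SplitPoint F) : ℤ) =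
    Fintype.card F + ∑ x : F, quadraticAddChar F (x ^ 3) - 8 := by
  have hfour : ∑ x : F with x ^ 4 = x, (1 + quadraticAddChar F (x ^ 3)) = 8 := by
    rw [sum_congr rfl fun x hx => congrArg (1 + ·) <|
        quadraticAddChar_cube_of_pow_four_eq hζ (mem_filter.mp hx).2,
      sum_const, card_filter_pow_succ_eq_self (by norm_num) hζ]
    rfl
  calc (Fintype.card (SplitPoint F) : ℤ)
      = ∑ x : F with x ^ 4 ≠ x, (#{y | y ^ 2 + y = x ^ 3} : ℤ) := by
        rw [Fintype.card_subtype, card_filter, Fintype.sum_prod_type, sum_filter]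
        push_cast
        refine sum_congr rfl fun x _ => ?_
        by_cases hx : x ^ 4 = x <;> simp [hx]
    _ = ∑ x : F, (1 + quadraticAddChar F (x ^ 3)) - 8 := by
        rw [← hfour, eq_sub_iff_add_eq, add_comm,
          sum_congr rfl fun x _ => card_artinSchreier_fibre _, sum_filter_add_sum_filter_not]
    _ = _ := by simp [sum_add_distrib]

end Counting

namespace SplitPoint

variable {F : Type*} [Field F] (p : SplitPoint F)

theorem fst_ne_zero : p.1.1 ≠ 0 := fun h => p.2.2 (by simp [h])

theorem snd_ne_zero : p.1.2 ≠ 0 := by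
  have := p.2.1
  have := p.fst_ne_zero
  grind

theorem snd_add_one_ne_zero : p.1.2 + 1 ≠ 0 := by
  have := p.2.1
  have := p.fst_ne_zero
  grind

variable [CharP F 2]

theorem snd_sq_add_snd_add_one_ne_zero : p.1.2 ^ 2 + p.1.2 + 1 ≠ 0 := by
  have := p.2.1
  have := p.2.2
  grind

/-- An automorphism of order three of the curve `y² + y = x³` which preserves the locator. -/
def shift : SplitPoint F :=
  ⟨(p.1.2 / p.1.1 ^ 2, (p.1.2 + 1)⁻¹), by
    have hx := p.fst_ne_zero
    have hy := p.snd_ne_zero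
    have hy1 := p.snd_add_one_ne_zero
    have hcube : (p.1.2 / p.1.1 ^ 2) ^ 3 = p.1.2 / (p.1.2 + 1) ^ 2 := by
      have := p.2.1
      rw [div_pow, ← pow_mul, pow_mul' _ 2 3, ← this]
      field
    refine ⟨?_, fun hfix => p.snd_sq_add_snd_add_one_ne_zero ?_⟩
    · rw [hcube]
      field_simp
      grind
    · have := mul_right_cancel₀ (div_ne_zero hy (pow_ne_zero 2 hx))
        (((pow_succ _ 3).symm.trans hfix).trans (one_mul _).symm)
      grind⟩

theorem shift_snd : p.shift.1.2 = (p.1.2 + 1)⁻¹ := rfl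

theorem shift_shift_snd : p.shift.shift.1.2 = (p.1.2 + 1) / p.1.2 := by
  have := p.snd_ne_zero
  have := p.snd_add_one_ne_zero
  have : p.1.2 + 1 + 1 = p.1.2 := by grind
  rw [shift_snd, shift_snd]
  grind

theorem locator_eq_iff (k : SplitPoint F) : locator k.1 = locator p.1 ↔
    k.1.2 = p.1.2 ∨ k.1.2 = p.shift.1.2 ∨ k.1.2 = p.shift.shift.1.2 := by
  have hy := p.snd_ne_zero
  have hy1 := p.snd_add_one_ne_zero
  have hk := k.snd_ne_zero
  have hk1 := k.snd_add_one_ne_zero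
  rw [shift_shift_snd, shift_snd, locator, locator, ← p.2.1, ← k.2.1]
  generalize p.1.2 = y at *
  generalize k.1.2 = v at *
  have hfactor : (v + (v ^ 2 + v)⁻¹ - (y + (y ^ 2 + y)⁻¹)) * (v * (v + 1) * (y * (y + 1))) =
      (v - y) * (v * (y + 1) - 1) * (v * y - (y + 1)) := by
    grind
  have hprod : v * (v + 1) * (y * (y + 1)) ≠ 0 := by positivity
  rw [← sub_eq_zero, ← mul_eq_zero_iff_right hprod, hfactor, mul_eq_zero, mul_eq_zero, sub_eq_zero,
    sub_eq_zero, sub_eq_zero, or_assoc, mul_eq_one_iff_eq_inv₀ hy1, eq_div_iff hy]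

theorem snd_ne_shift_snd : p.1.2 ≠ p.shift.1.2 := by
  have := p.snd_add_one_ne_zero
  have := p.snd_sq_add_snd_add_one_ne_zero
  rw [shift_snd]
  grind

theorem snd_ne_shift_shift_snd : p.1.2 ≠ p.shift.shift.1.2 := by
  have := p.snd_ne_zero
  have := p.snd_sq_add_snd_add_one_ne_zero
  rw [shift_shift_snd]
  grind

variable [Fintype F] [DecidableEq F] {ζ : F} (hζ : IsPrimitiveRoot ζ 3)
include hζ

omit [CharP F 2] in
theorem card_snd_fibre : #{k : SplitPoint F | k.1.2 = p.1.2} = 3 := by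
  refine .trans (card_nbij (t := {x | x ^ 3 = p.1.1 ^ 3}) (fun k => k.1.1) ?_ ?_ ?_)
    (card_filter_pow_eq_pow three_pos hζ p.fst_ne_zero)
  · intro k hk
    have := (mem_filter.mp hk).2
    simp [← k.2.1, ← p.2.1, this]
  · intro k hk l hl hkl
    exact Subtype.ext (Prod.ext hkl ((mem_filter.mp hk).2.trans (mem_filter.mp hl).2.symm))
  · intro x hx
    have hx3 : x ^ 3 = p.1.1 ^ 3 := (mem_filter.mp hx).2
    have := p.2.2
    have := p.fst_ne_zero
    exact ⟨⟨(x, p.1.2), hx3 ▸ p.2.1, by grind⟩, by simp, rfl⟩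

theorem card_locator_fibre : #{k : SplitPoint F | locator k.1 = locator p.1} = 9 := by
  let S : Finset F := {p.1.2, p.shift.1.2, p.shift.shift.1.2}
  have hS : #S = 3 := card_eq_three.mpr ⟨_, _, _, p.snd_ne_shift_snd, p.snd_ne_shift_shift_snd,
    p.shift.snd_ne_shift_snd, rfl⟩
  have hsub : S ⊆ univ.image fun k : SplitPoint F => k.1.2 := by
    intro y hy
    simp only [S, mem_insert, mem_singleton] at hy
    rcases hy with rfl | rfl | rfl <;> exact mem_image_of_mem _ (mem_univ _)
  have hcard := card_filter_mem_eq_mul (fun k : SplitPoint F => k.card_snd_fibre hζ) hsub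
  simpa only [S, hS, mem_insert, mem_singleton, ← locator_eq_iff] using hcard

end SplitPoint

section CardFourPow

variable {F : Type*} [Field F] [Fintype F] {k : ℕ} (hF : Fintype.card F = 4 ^ k)
include hF

theorem charP_two_of_card_eq_four_pow : CharP F 2 := by
  refine charP_of_card_eq_prime_pow (f := 2 * k) ?_
  rw [hF, pow_mul]
  norm_num

theorem exists_isPrimitiveRoot_three_of_card_eq_four_pow : ∃ ζ : F, IsPrimitiveRoot ζ 3 := by
  classical
  have hdvd : 3 ∣ Fintype.card Fˣ := by
    rw [Fintype.card_units, hF]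
    exact Nat.sub_one_dvd_pow_sub_one 4 k
  obtain ⟨u, hu⟩ := exists_prime_orderOf_dvd_card 3 hdvd
  exact ⟨u, IsPrimitiveRoot.coe_units_iff.mpr (hu ▸ IsPrimitiveRoot.orderOf u)⟩

-- The absolute value of the character sum is `2 ^ (k + 1)`. Its sign follows from the divisibility
-- of the number of points by `3`.
theorem card_splitPoint_of_card_eq_four_pow [DecidableEq F] :
    (Fintype.card (SplitPoint F) : ℤ) = 4 ^ k - 2 * (-2) ^ k - 8 := by
  have := charP_two_of_card_eq_four_pow hF
  obtain ⟨ζ, hζ⟩ := exists_isPrimitiveRoot_three_of_card_eq_four_pow hF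
  have hcard := card_splitPoint hζ
  have hsq := sq_sum_quadraticAddChar_cube hζ
  rw [hF] at hcard hsq
  push_cast at hcard hsq
  have hdvd : (3 : ℤ) ∣ Fintype.card (SplitPoint F) := by
    rw [← card_image_mul_card_fibre fun p : SplitPoint F => p.card_locator_fibre hζ]
    exact ⟨3 * _, by push_cast; ring⟩
  have hsq' : (2 * (-2) ^ k : ℤ) ^ 2 = 4 * 4 ^ k := by
    rw [mul_pow, ← pow_mul, mul_comm k, pow_mul]
    norm_num
  rcases sq_eq_sq_iff_eq_or_eq_neg.mp (hsq.trans hsq'.symm) with hsum | hsum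
  · have h4 : (4 : ℤ) ^ k ≡ 1 [ZMOD 3] := by
      simpa using Int.ModEq.pow k (show 4 ≡ 1 [ZMOD 3] by decide)
    have h2 : (-2 : ℤ) ^ k ≡ 1 [ZMOD 3] := by
      simpa using Int.ModEq.pow k (show -2 ≡ 1 [ZMOD 3] by decide)
    rw [Int.ModEq] at h4 h2
    omega
  · rw [hcard, hsum]
    ring

end CardFourPow

theorem stmt_6_general {F : Type*} [Field F] [Fintype F] [DecidableEq F] {k t m : ℕ}
    (hF : Fintype.card F = 4 ^ k) (ht : 1 ≤ t) (htm : t < m)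
    (hm : (m : ℚ) ≤ (4 ^ k - 2 * (-2) ^ k - 8) / 9) :
    ExistsOptimalLRC F (9 * m) (7 * t + 1) (9 * (m - t)) 7 3 ∧
    ExistsOptimalLRC F (9 * m) (2 * t + 1) (9 * (m - t)) 2 8 := by
  have := charP_two_of_card_eq_four_pow hF
  obtain ⟨ζ, hζ⟩ := exists_isPrimitiveRoot_three_of_card_eq_four_pow hF
  have hcard : 9 * m ≤ Fintype.card (SplitPoint F) := by
    zify
    rw [card_splitPoint_of_card_eq_four_pow hF]
    rw [le_div_iff₀ (by norm_num), mul_comm] at hm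
    exact_mod_cast hm
  obtain ⟨p, hp⟩ := exists_embedding_card_fibre (z := fun p : SplitPoint F => locator p.1)
    (fun p => p.card_locator_fibre hζ) (by norm_num) hcard
  have hinj : Function.Injective fun i => (p i).1 := Subtype.val_injective.comp p.injective
  have hx (i) : (p i).1.1 ≠ 0 := (p i).fst_ne_zero
  have hcurve (i) := (p i).2.1
  constructor
  · exact existsOptimalLRC_of_locator (by norm_num) rfl ht htm hinj hx hcurve hp (by decide) 0
      rfl rfl (fibreZerosLT_seven hinj hx)
  · exact existsOptimalLRC_of_locator (by norm_num) rfl ht htm hinj hx hcurve hp (by decide) 0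
      rfl rfl (fibreZerosLT_two hinj hx)

/-- For `q = 4^(2s+1) = 2^(4s+2)`, for all
`1 ≤ t < m ≤ (q + 2^(2s+2) - 8)/9`, there exist an optimal `(7, 3)`-LRC with
parameters `[9m, 7t + 1, 9(m-t)]_q` and an optimal `(2, 8)`-LRC with parameters
`[9m, 2t + 1, 9(m-t)]_q`. -/
theorem stmt_6 (s : ℕ) (hs : 0 < s) (q : ℕ) (hq : q = 2 ^ (4 * s + 2))
    (t m : ℕ) (ht : 1 ≤ t) (htm : t < m)
    (hm : (m : ℚ) ≤ ((q : ℚ) + 2 ^ (2 * s + 2) - 8) / 9)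
    (F : Type*) [Field F] [Fintype F] [DecidableEq F] (hF : Fintype.card F = q) :
    ExistsOptimalLRC F (9 * m) (7 * t + 1) (9 * (m - t)) 7 3 ∧
    ExistsOptimalLRC F (9 * m) (2 * t + 1) (9 * (m - t)) 2 8 := by
  have hq4 : q = 4 ^ (2 * s + 1) := by
    rw [hq, show 4 = 2 ^ 2 by norm_num, ← pow_mul]
    ring_nf
  have hsign : (-2 : ℚ) ^ (2 * s + 1) = -2 ^ (2 * s + 1) := Odd.neg_pow (by simp) 2
  refine stmt_6_general (hF.trans hq4) ht htm (hm.trans_eq ?_)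
  rw [hq4, hsign]
  push_cast
  ring
end
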